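/- arXiv:1903.01622 — 3 statements merged into one kernel-verified Lean document; each statement's English description precedes it below -/
import Mathlib

section
/- Let k ≥ d ≥ 3 be integers and let n ≥ 3k^5. If F is a (d, 2k+d−3)-conditionally intersecting family of k-element subsets of [n], then |F| ≤ binomial(n−1, k−1). -/
/-- A family `F` of finsets is `(d, s)`-conditionally intersecting if there do not exist
`d` distinct members of `F` whose union has size at most `s` and whose intersection is empty. -/
def CondIntersecting {n : ℕ} (d s : ℕ) (F : Finset (Finset (Fin n))) : Prop :=
  ¬ ∃ D ⊆ F, D.card = d ∧ (D.sup id).card ≤ s ∧ D.inf id = ∅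

/-!
Let `m = n - (k - 1)`. Since `m * n.choose (k - 1) = n * (n - 1).choose (k - 1)`, it suffices to
split `F` into `G` and `H` so that `n * |G| ≤ m * |∂G|` and `n * |H| ≤ m * |N|`, where `N` consists
of the `(k - 1)`-sets outside the shadow of `F`.

Let `G` consist of the members with a `(k - 1)`-subset contained in no other member of `F`. Such a
subset has one superset in `G` instead of up to `m`, which sharpens the local LYM inequality.

If `A ∈ H`, every `x ∈ A` can be exchanged for some `y x ∉ A` without leaving `F`. Conditional
intersection, applied to some of these exchanged sets, another member `C` and possibly `A` itself,
forces every `C ∈ F` that meets `A` to meet `A ∪ y(A)`, a set of size at most `2k`, in at least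
three points. So a `(k - 1)`-set that meets `A ∪ y(A)` in a single point of `A` lies in `N`, which
gives `A` about `n ^ (k - 2)` neighbours in `N`, whereas only `O(n ^ (k - 3))` members of `H` pass
through a given point.
-/

open Finset FinsetFamily

section Binomial

variable {n k : ℕ}

lemma choose_succ_add_le (m j r : ℕ) :
    (m + j).choose (r + 1) ≤ m.choose (r + 1) + j * (m + j - 1).choose r := by
  induction j with
  | zero => simp
  | succ j ih =>
    have hmono : (m + j - 1).choose r ≤ (m + j).choose r := Nat.choose_le_choose r (by omega)
    calc (m + (j + 1)).choose (r + 1) = (m + j).choose r + (m + j).choose (r + 1) :=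
          Nat.choose_succ_succ (m + j) r
      _ ≤ (m + j).choose r + (m.choose (r + 1) + j * (m + j).choose r) := by
          gcongr
          exact ih.trans (by gcongr)
      _ = m.choose (r + 1) + (j + 1) * (m + (j + 1) - 1).choose r := by
          rw [← Nat.add_assoc m j 1, Nat.add_sub_cancel]
          ring

lemma mul_choose_sub_three_le (hk : 3 ≤ k) (hn : 2 * k ≤ n) :
    n * (n - 3).choose (k - 3) ≤
      (k - 2) * (n - 2 * k).choose (k - 2) + 2 * k ^ 2 * (n - 3).choose (k - 3) := by
  obtain ⟨r, rfl⟩ : ∃ r, k = r + 3 := ⟨k - 3, by omega⟩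
  obtain ⟨m, rfl⟩ : ∃ m, n = m + (2 * r + 4) + 2 := ⟨n - 2 * (r + 3), by omega⟩
  have habsorb : (m + (2 * r + 4)) * (m + (2 * r + 3)).choose r =
      (m + (2 * r + 4)).choose (r + 1) * (r + 1) := Nat.add_one_mul_choose_eq (m + (2 * r + 3)) r
  have hlower : (m + (2 * r + 4)).choose (r + 1) ≤
      m.choose (r + 1) + (2 * r + 4) * (m + (2 * r + 3)).choose r := choose_succ_add_le m _ r
  rw [show m + (2 * r + 4) + 2 - 3 = m + (2 * r + 3) by omega, show r + 3 - 3 = r by omega,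
    show r + 3 - 2 = r + 1 by omega, show m + (2 * r + 4) + 2 - 2 * (r + 3) = m by omega]
  nlinarith

lemma three_mul_choose_three_le (k : ℕ) : 3 * (2 * k).choose 3 ≤ 4 * k ^ 3 := by
  have := Nat.descFactorial_le_pow (2 * k) 3
  rw [Nat.descFactorial_eq_factorial_mul_choose, show Nat.factorial 3 = 6 from rfl, mul_pow] at this
  omega

lemma mul_choose_three_mul_add_le (hk : 3 ≤ k) (hn : 3 * k ^ 5 ≤ n) :
    (k - 2) * ((k - 1) * (2 * k).choose 3) * n + 2 * k ^ 2 * (n - (k - 1)) ≤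
      n * (n - (k - 1)) := by
  have hkn : 81 * k ≤ n := by nlinarith [Nat.pow_le_pow_left hk 4]
  have hk2n : 4 * k ^ 2 ≤ n := by nlinarith [Nat.pow_le_pow_left hk 3]
  have hcoef : 9 * ((k - 2) * ((k - 1) * (2 * k).choose 3)) ≤ 4 * n := calc
    9 * ((k - 2) * ((k - 1) * (2 * k).choose 3))
      = 3 * ((k - 2) * ((k - 1) * (3 * (2 * k).choose 3))) := by ring
    _ ≤ 3 * (k * (k * (4 * k ^ 3))) := by
        gcongr 3 * (?_ * (?_ * ?_))
        · exact Nat.sub_le k 2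
        · exact Nat.sub_le k 1
        · exact three_mul_choose_three_le k
    _ = 4 * (3 * k ^ 5) := by ring
    _ ≤ 4 * n := by gcongr
  have hhalf : 2 * ((k - 2) * ((k - 1) * (2 * k).choose 3)) ≤ n - (k - 1) := by omega
  have := Nat.mul_le_mul_right n hhalf
  have := Nat.mul_le_mul_right (n - (k - 1)) hk2n
  linarith

lemma mul_choose_three_mul_choose_le (hk : 3 ≤ k) (hn : 3 * k ^ 5 ≤ n) :
    (k - 1) * ((2 * k).choose 3 * (n - 3).choose (k - 3)) * n ≤
      (n - 2 * k).choose (k - 2) * (n - (k - 1)) := by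
  have hkn : 2 * k ≤ n := by nlinarith [Nat.pow_le_pow_left hk 4]
  have hcoef := Nat.mul_le_mul_right ((n - 3).choose (k - 3)) (mul_choose_three_mul_add_le hk hn)
  have hbinom := Nat.mul_le_mul_right (n - (k - 1)) (mul_choose_sub_three_le hk hkn)
  refine Nat.le_of_mul_le_mul_left ?_ (show 0 < k - 2 by omega)
  linarith

end Binomial

section Sized

variable {α : Type*} [DecidableEq α] [Fintype α] {F : Finset (Finset α)} {k t : ℕ}

lemma card_filter_superset_le (hF : (F : Set (Finset α)).Sized k) (P : Finset α) :
    #{C ∈ F | P ⊆ C} ≤ (Fintype.card α - #P).choose (k - #P) := by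
  rw [← card_compl, ← card_powersetCard]
  refine card_le_card_of_injOn (· \ P) (fun C hC ↦ ?_) fun C hC C' hC' h ↦ ?_
  · obtain ⟨hCF, hPC⟩ := mem_filter.1 hC
    exact mem_powersetCard.2 ⟨sdiff_subset_sdiff (subset_univ C) subset_rfl,
      by rw [card_sdiff_of_subset hPC, hF hCF]⟩
  · rw [← sdiff_union_of_subset (mem_filter.1 hC).2, ← sdiff_union_of_subset (mem_filter.1 hC').2]
    exact congrArg (· ∪ P) h

lemma card_filter_le_card_inter_le (hF : (F : Set (Finset α)).Sized k)
    (W : Finset α) :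
    #{C ∈ F | t ≤ #(C ∩ W)} ≤ (#W).choose t * (Fintype.card α - t).choose (k - t) := by
  have hcover : {C ∈ F | t ≤ #(C ∩ W)} ⊆ (W.powersetCard t).biUnion fun P ↦ {C ∈ F | P ⊆ C} := by
    intro C hC
    obtain ⟨hCF, htC⟩ := mem_filter.1 hC
    obtain ⟨P, hP, hPt⟩ := exists_subset_card_eq htC
    exact mem_biUnion.2 ⟨P, mem_powersetCard.2 ⟨hP.trans inter_subset_right, hPt⟩,
      mem_filter.2 ⟨hCF, hP.trans inter_subset_left⟩⟩
  rw [← card_powersetCard]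
  refine (card_le_card hcover).trans (card_biUnion_le_card_mul _ _ _ fun P hP ↦ ?_)
  exact (mem_powersetCard.1 hP).2 ▸ card_filter_superset_le hF P

lemma card_shadow_add_card_nonshadow (hF : (F : Set (Finset α)).Sized k) :
    #(∂ F) + #(univ.powersetCard (k - 1) \ ∂ F) = (Fintype.card α).choose (k - 1) := by
  have hshadow : ∂ F ⊆ univ.powersetCard (k - 1) := subset_powersetCard_univ_iff.2 hF.shadow
  rw [add_comm, card_sdiff_add_card_eq_card hshadow, card_powersetCard, card_univ]

end Sized

section OwnFacet

variable {α : Type*} [DecidableEq α] {F G : Finset (Finset α)} {A : Finset α} {k : ℕ}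

/-- `A` has an own facet in the family `F`: some set `A \ {x}` with `x ∈ A` is contained in no
member of `F` other than `A`. -/
def HasOwnFacet (F : Finset (Finset α)) (A : Finset α) : Prop :=
  ∃ x ∈ A, ∀ B ∈ F, A.erase x ⊆ B → B = A

lemma HasOwnFacet.anti (hGF : G ⊆ F) (hA : HasOwnFacet F A) : HasOwnFacet G A := by
  obtain ⟨x, hx, hown⟩ := hA
  exact ⟨x, hx, fun B hB ↦ hown B (hGF hB)⟩

lemma card_le_card_filter_subsingleton_of_hasOwnFacet (hG : ∀ A ∈ G, HasOwnFacet G A) :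
    #G ≤ #{T ∈ ∂ G | #{A ∈ G | T ⊆ A} ≤ 1} := by
  refine card_le_card_of_forall_subsingleton (fun A T ↦ T ⊆ A) (fun A hA ↦ ?_) fun T hT ↦ ?_
  · obtain ⟨x, hx, hown⟩ := hG A hA
    refine ⟨A.erase x, mem_filter.2 ⟨erase_mem_shadow hA hx, ?_⟩, erase_subset x A⟩
    refine card_le_one_iff_subset_singleton.2 ⟨A, fun B hB ↦ ?_⟩
    exact mem_singleton.2 (hown B (mem_filter.1 hB).1 (mem_filter.1 hB).2)
  · intro A hA B hB
    exact card_le_one.1 (mem_filter.1 hT).2 A (mem_filter.2 hA) B (mem_filter.2 hB)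

lemma card_mul_le_sum_card_superset (hG : (G : Set (Finset α)).Sized k) :
    #G * k ≤ ∑ T ∈ ∂ G, #{A ∈ G | T ⊆ A} := by
  have card_facets : ∀ A ∈ G, k ≤ #((∂ G).bipartiteAbove (fun A T ↦ T ⊆ A) A) := fun A hA ↦ by
    rw [← hG hA, ← card_image_of_injOn A.erase_injOn]
    refine card_le_card (image_subset_iff.2 fun x hx ↦ ?_)
    exact mem_filter.2 ⟨erase_mem_shadow hA hx, erase_subset x A⟩
  calc #G * k ≤ ∑ A ∈ G, #((∂ G).bipartiteAbove (fun A T ↦ T ⊆ A) A) :=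
        card_nsmul_le_sum _ _ _ card_facets
    _ = ∑ T ∈ ∂ G, #{A ∈ G | T ⊆ A} := sum_card_bipartiteAbove_eq_sum_card_bipartiteBelow _

/-- The local LYM inequality has `k` in place of `card α`. -/
theorem card_mul_card_le_of_hasOwnFacet [Fintype α] (hG : (G : Set (Finset α)).Sized k)
    (hown : ∀ A ∈ G, HasOwnFacet G A) :
    #G * Fintype.card α ≤ #(∂ G) * (Fintype.card α - (k - 1)) := by
  obtain rfl | ⟨A, hA⟩ := G.eq_empty_or_nonempty
  · simp
  have hkα : k ≤ Fintype.card α := hG hA ▸ card_le_univ A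
  have hk : 1 ≤ k := by
    obtain ⟨x, hx, -⟩ := hown A hA
    exact hG hA ▸ card_pos.2 ⟨x, hx⟩
  set m := Fintype.card α - (k - 1)
  have hdeg : ∀ T ∈ ∂ G, #{A ∈ G | T ⊆ A} + (if #{A ∈ G | T ⊆ A} ≤ 1 then m - 1 else 0) ≤ m := by
    intro T hT
    have hTm : #{A ∈ G | T ⊆ A} ≤ m := by
      have := card_filter_superset_le hG T
      rwa [hG.shadow hT, Nat.sub_sub_self hk, Nat.choose_one_right] at this
    split_ifs <;> omega
  have hsum : #G * k + #G * (m - 1) ≤ #(∂ G) * m := calc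
    #G * k + #G * (m - 1)
      ≤ ∑ T ∈ ∂ G, #{A ∈ G | T ⊆ A} + #{T ∈ ∂ G | #{A ∈ G | T ⊆ A} ≤ 1} * (m - 1) :=
        Nat.add_le_add (card_mul_le_sum_card_superset hG)
          (Nat.mul_le_mul_right _ (card_le_card_filter_subsingleton_of_hasOwnFacet hown))
    _ = ∑ T ∈ ∂ G, (#{A ∈ G | T ⊆ A} + if #{A ∈ G | T ⊆ A} ≤ 1 then m - 1 else 0) := by
        rw [sum_add_distrib, ← sum_filter, sum_const, smul_eq_mul]
    _ ≤ #(∂ G) * m := sum_le_card_nsmul _ _ _ hdeg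
  rwa [← mul_add, show k + (m - 1) = Fintype.card α by omega] at hsum

end OwnFacet

section TripleCover

variable {α : Type*} [DecidableEq α] {F H : Finset (Finset α)} {A S W : Finset α} {k w : ℕ} {x : α}

/-- `W` is a triple cover of `A` in `F`: it contains `A`, and every member of `F` meeting `A` has at
least three elements in `W`. -/
structure IsTripleCover (F : Finset (Finset α)) (A W : Finset α) : Prop where
  subset : A ⊆ W
  three_le_card_inter : ∀ C ∈ F, (C ∩ A).Nonempty → 3 ≤ #(C ∩ W)

lemma IsTripleCover.insert_notMem_shadow (hW : IsTripleCover F A W) (hx : x ∈ A)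
    (hS : Disjoint S W) : insert x S ∉ ∂ F := by
  intro hmem
  obtain ⟨a, -, haF⟩ := mem_shadow_iff_insert_mem.1 hmem
  have hthree : 3 ≤ #(insert a (insert x S) ∩ W) :=
    hW.three_le_card_inter _ haF ⟨x, by simp [hx]⟩
  have hpair : insert a (insert x S) ∩ W ⊆ {a, x} := by
    intro z hz
    have hzS : z ∈ W → z ∉ S := fun hzW hzS ↦ disjoint_left.1 hS hzS hzW
    simp only [mem_inter, mem_insert, mem_singleton] at hz ⊢
    tauto
  have := (card_le_card hpair).trans card_le_two
  omega

variable [Fintype α]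

lemma IsTripleCover.choose_le_card_nonshadow (hW : IsTripleCover F A W) (hA : A.Nonempty)
    (hk : 2 ≤ k) :
    (Fintype.card α - #W).choose (k - 2) ≤
      #{T ∈ univ.powersetCard (k - 1) \ ∂ F | (A ∩ T).Nonempty} := by
  obtain ⟨x, hx⟩ := hA
  rw [← card_compl, ← card_powersetCard]
  have disjoint_cover : ∀ S ∈ powersetCard (k - 2) Wᶜ, Disjoint S W := fun S hS ↦
    subset_compl_iff_disjoint_right.1 (mem_powersetCard.1 hS).1
  have notMem : ∀ S ∈ powersetCard (k - 2) Wᶜ, x ∉ S := fun S hS hxS ↦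
    disjoint_left.1 (disjoint_cover S hS) hxS (hW.subset hx)
  refine card_le_card_of_injOn (insert x) (fun S hS ↦ ?_) fun S hS S' hS' h ↦ ?_
  · have hcard : #(insert x S) = k - 1 := by
      rw [card_insert_of_notMem (notMem S hS), (mem_powersetCard.1 hS).2]
      omega
    exact mem_filter.2 ⟨mem_sdiff.2 ⟨mem_powersetCard.2 ⟨subset_univ _, hcard⟩,
      hW.insert_notMem_shadow hx (disjoint_cover S hS)⟩, x, by simp [hx]⟩
  · rw [← erase_insert (notMem S hS), h, erase_insert (notMem S' hS')]

lemma card_filter_mem_le_of_tripleCovers (hF : (F : Set (Finset α)).Sized k) (hHF : H ⊆ F)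
    (hH : ∀ A ∈ H, ∃ W, #W ≤ w ∧ IsTripleCover F A W) (x : α) :
    #{A ∈ H | x ∈ A} ≤ w.choose 3 * (Fintype.card α - 3).choose (k - 3) := by
  obtain hempty | ⟨A, hA⟩ := {A ∈ H | x ∈ A}.eq_empty_or_nonempty
  · simp [hempty]
  obtain ⟨hAH, hxA⟩ := mem_filter.1 hA
  obtain ⟨W, hWw, hW⟩ := hH A hAH
  calc #{C ∈ H | x ∈ C} ≤ #{C ∈ F | 3 ≤ #(C ∩ W)} := by
        refine card_le_card fun C hC ↦ ?_
        obtain ⟨hCH, hxC⟩ := mem_filter.1 hC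
        exact mem_filter.2 ⟨hHF hCH,
          hW.three_le_card_inter C (hHF hCH) ⟨x, mem_inter.2 ⟨hxC, hxA⟩⟩⟩
    _ ≤ (#W).choose 3 * (Fintype.card α - 3).choose (k - 3) := card_filter_le_card_inter_le hF W
    _ ≤ w.choose 3 * (Fintype.card α - 3).choose (k - 3) := by gcongr

theorem card_mul_choose_le_of_tripleCovers (hF : (F : Set (Finset α)).Sized k) (hk : 2 ≤ k)
    (hHF : H ⊆ F) (hH : ∀ A ∈ H, ∃ W, #W ≤ w ∧ IsTripleCover F A W) :
    #H * (Fintype.card α - w).choose (k - 2) ≤ #(univ.powersetCard (k - 1) \ ∂ F) *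
      ((k - 1) * (w.choose 3 * (Fintype.card α - 3).choose (k - 3))) := by
  refine card_mul_le_card_mul (fun A T ↦ (A ∩ T).Nonempty) (fun A hA ↦ ?_) fun T hT ↦ ?_
  · obtain ⟨W, hWw, hW⟩ := hH A hA
    have hAne : A.Nonempty := card_pos.1 (by rw [hF (hHF hA)]; omega)
    exact (Nat.choose_le_choose _ (by omega)).trans (hW.choose_le_card_nonshadow hAne hk)
  · have hunion : {A ∈ H | (A ∩ T).Nonempty} ⊆ T.biUnion fun x ↦ {A ∈ H | x ∈ A} := by
      intro A hA
      obtain ⟨hAH, x, hx⟩ := mem_filter.1 hA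
      exact mem_biUnion.2 ⟨x, (mem_inter.1 hx).2, mem_filter.2 ⟨hAH, (mem_inter.1 hx).1⟩⟩
    rw [← (mem_powersetCard.1 (mem_sdiff.1 hT).1).2]
    exact (card_le_card hunion).trans (card_biUnion_le_card_mul _ _ _ fun x _ ↦
      card_filter_mem_le_of_tripleCovers hF hHF hH x)

theorem card_mul_le_of_tripleCovers (hF : (F : Set (Finset α)).Sized k) (hk : 3 ≤ k)
    (hα : 3 * k ^ 5 ≤ Fintype.card α) (hHF : H ⊆ F)
    (hH : ∀ A ∈ H, ∃ W, #W ≤ 2 * k ∧ IsTripleCover F A W) :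
    #H * Fintype.card α ≤
      #(univ.powersetCard (k - 1) \ ∂ F) * (Fintype.card α - (k - 1)) := by
  have hcount := card_mul_choose_le_of_tripleCovers hF (by omega) hHF hH
  set n := Fintype.card α
  have hpos : 0 < (n - 2 * k).choose (k - 2) := by
    have : 3 * k ≤ n := by nlinarith [Nat.pow_le_pow_left hk 4]
    exact Nat.choose_pos (by omega)
  refine Nat.le_of_mul_le_mul_right ?_ hpos
  set N := #(univ.powersetCard (k - 1) \ ∂ F)
  calc #H * n * (n - 2 * k).choose (k - 2) = #H * (n - 2 * k).choose (k - 2) * n := by ring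
    _ ≤ N * ((k - 1) * ((2 * k).choose 3 * (n - 3).choose (k - 3))) * n := by gcongr
    _ = N * ((k - 1) * ((2 * k).choose 3 * (n - 3).choose (k - 3)) * n) := by ring
    _ ≤ N * ((n - 2 * k).choose (k - 2) * (n - (k - 1))) :=
        Nat.mul_le_mul_left N (mul_choose_three_mul_choose_le hk hα)
    _ = N * (n - (k - 1)) * (n - 2 * k).choose (k - 2) := by ring

end TripleCover

section Exchange

variable {α : Type*} [DecidableEq α] {F : Finset (Finset α)} {A C J : Finset α} {k : ℕ} {x z : α}
  {y : α → α}

/-- The set obtained from `A` by exchanging `x` for `y x`. -/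
def exchange (y : α → α) (A : Finset α) (x : α) : Finset α :=
  insert (y x) (A.erase x)

/-- `y` is an exchange map for `A` in `F`: each element `x` of `A` may be exchanged for the element
`y x` outside `A` without leaving `F`. Only the values of `y` on `A` matter. -/
structure IsExchange (F : Finset (Finset α)) (A : Finset α) (y : α → α) : Prop where
  notMem : ∀ x ∈ A, y x ∉ A
  exchange_mem : ∀ x ∈ A, exchange y A x ∈ F

lemma exists_isExchange (hF : (F : Set (Finset α)).Sized k) (hA : A ∈ F)
    (hown : ¬ HasOwnFacet F A) : ∃ y, IsExchange F A y := by
  have hy : ∀ x, ∃ b, x ∈ A → b ∉ A ∧ insert b (A.erase x) ∈ F := by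
    intro x
    by_cases hx : x ∈ A
    · obtain ⟨B, hB, hsub, hne⟩ : ∃ B ∈ F, A.erase x ⊆ B ∧ B ≠ A := by
        simpa only [HasOwnFacet, not_exists, not_and, not_forall, exists_prop] using
          not_and.1 (not_exists.1 hown x) hx
      obtain ⟨b, hb, rfl⟩ : ∃ b ∉ A.erase x, insert b (A.erase x) = B :=
        exists_eq_insert_iff.2 ⟨hsub, by rw [card_erase_add_one hx, hF hA, hF hB]⟩
      refine ⟨b, fun _ ↦ ⟨fun hbA ↦ hb (mem_erase.2 ⟨?_, hbA⟩), hB⟩⟩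
      rintro rfl
      exact hne (insert_erase hx)
    · exact ⟨x, fun h ↦ absurd h hx⟩
  choose y hy using hy
  exact ⟨y, fun x hx ↦ (hy x hx).1, fun x hx ↦ (hy x hx).2⟩

lemma exchange_subset_union (hx : x ∈ J) :
    exchange y A x ⊆ C ∪ A ∪ J.image y := by
  refine insert_subset (mem_union_right _ (mem_image_of_mem y hx)) ?_
  exact (erase_subset x A).trans (subset_union_right.trans subset_union_left)

lemma card_union_image_add_card_inter_le (hA : #A = k) (hC : #C = k) (J : Finset α) :
    #(C ∪ A ∪ J.image y) + #(C ∩ A) ≤ 2 * k + #J := by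
  have := card_union_le (C ∪ A) (J.image y)
  have := card_image_le (s := J) (f := y)
  have := card_union_add_card_inter C A
  omega

lemma notMem_image_exchange_of_card_inter_lt (hJ : J ⊆ A) (hC : #(C ∩ A) + 1 < #A) :
    C ∉ J.image (exchange y A) := by
  intro hmem
  obtain ⟨x, hx, rfl⟩ := mem_image.1 hmem
  have hsub : A.erase x ⊆ exchange y A x ∩ A :=
    subset_inter (subset_insert _ _) (erase_subset x A)
  have := card_le_card hsub
  rw [card_erase_of_mem (hJ hx)] at this
  omega

namespace IsExchange

variable (hy : IsExchange F A y)
include hy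

lemma mem_exchange_iff (hx : x ∈ A) (hz : z ∈ A) : z ∈ exchange y A x ↔ z ≠ x := by
  have hzy : z ≠ y x := fun h ↦ hy.notMem x hx (h ▸ hz)
  simp [exchange, hz, hzy]

lemma injOn_exchange : Set.InjOn (exchange y A) A := by
  intro a ha b hb hab
  by_contra hne
  have : a ∈ exchange y A a := hab ▸ (hy.mem_exchange_iff hb ha).2 hne
  exact (hy.mem_exchange_iff ha ha).1 this rfl

lemma card_image_exchange (hJ : J ⊆ A) : #(J.image (exchange y A)) = #J :=
  card_image_of_injOn (hy.injOn_exchange.mono hJ)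

lemma image_exchange_subset (hJ : J ⊆ A) : J.image (exchange y A) ⊆ F :=
  image_subset_iff.2 fun x hx ↦ hy.exchange_mem x (hJ hx)

lemma notMem_image_exchange (hJ : J ⊆ A) : A ∉ J.image (exchange y A) := by
  intro hmem
  obtain ⟨x, hx, hxA⟩ := mem_image.1 hmem
  exact hy.notMem x (hJ hx) (hxA ▸ mem_insert_self (y x) _)

end IsExchange

end Exchange

section CondIntersecting

variable {n d s k : ℕ} {F : Finset (Finset (Fin n))} {A C U : Finset (Fin n)} {y : Fin n → Fin n}

lemma CondIntersecting.exists_forall_mem (hci : CondIntersecting d s F)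
    {D : Finset (Finset (Fin n))} (hDF : D ⊆ F) (hD : #D = d) (hU : #U ≤ s) (hDU : ∀ Z ∈ D, Z ⊆ U) :
    ∃ z, ∀ Z ∈ D, z ∈ Z := by
  by_contra! hempty
  refine hci ⟨D, hDF, hD, (card_le_card (Finset.sup_le hDU)).trans hU, ?_⟩
  refine eq_empty_of_forall_notMem fun z hz ↦ ?_
  obtain ⟨Z, hZ, hzZ⟩ := hempty z
  exact hzZ (Finset.inf_le (f := id) hZ hz)

namespace IsExchange

lemma lt_card_inter_add_two (hy : IsExchange F A y) (hci : CondIntersecting d s F)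
    (hF : (F : Set (Finset (Fin n))).Sized k) (hdk : d ≤ k) (hs : 2 * k + d ≤ s + 3) (hA : A ∈ F)
    (hC : C ∈ F) (hCA : (C ∩ A).Nonempty) : d < #(C ∩ A) + 2 := by
  by_contra! hlt
  have hpos := hCA.card_pos
  obtain ⟨J, hIJ, hJA, hJ⟩ : ∃ J, C ∩ A ⊆ J ∧ J ⊆ A ∧ #J = d - 2 :=
    exists_subsuperset_card_eq inter_subset_right (by omega) (by rw [hF hA]; omega)
  have hCJ : C ∉ J.image (exchange y A) :=
    notMem_image_exchange_of_card_inter_lt hJA (by rw [hF hA]; omega)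
  have hAC : A ≠ C := by
    rintro rfl
    rw [inter_self, hF hA] at hlt
    omega
  have hAJ : A ∉ insert C (J.image (exchange y A)) := fun hmem ↦
    hy.notMem_image_exchange hJA (mem_of_mem_insert_of_ne hmem hAC)
  obtain ⟨z, hz⟩ := hci.exists_forall_mem (D := insert A (insert C (J.image (exchange y A))))
    (U := C ∪ A ∪ J.image y)
    (insert_subset hA (insert_subset hC (hy.image_exchange_subset hJA)))
    (by
      rw [card_insert_of_notMem hAJ, card_insert_of_notMem hCJ, hy.card_image_exchange hJA]
      omega)
    (by
      have := card_union_image_add_card_inter_le (y := y) (hF hA) (hF hC) J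
      omega)
    (by
      simp only [forall_mem_insert, forall_mem_image]
      exact ⟨subset_union_right.trans subset_union_left,
        subset_union_left.trans subset_union_left, fun x hx ↦ exchange_subset_union hx⟩)
  simp only [forall_mem_insert, forall_mem_image] at hz
  obtain ⟨hzA, hzC, hzJ⟩ := hz
  exact (hy.mem_exchange_iff hzA hzA).1 (hzJ (hIJ (mem_inter.2 ⟨hzC, hzA⟩))) rfl

lemma exists_apply_mem (hy : IsExchange F A y) (hci : CondIntersecting d s F)
    (hF : (F : Set (Finset (Fin n))).Sized k) (hs : 2 * k ≤ s) (hA : A ∈ F) (hC : C ∈ F)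
    (hCA : (C ∩ A).Nonempty) (hd : #(C ∩ A) + 1 = d) : ∃ x ∈ C ∩ A, y x ∈ C := by
  by_contra! hyC
  have hCJ : C ∉ (C ∩ A).image (exchange y A) := by
    intro hmem
    obtain ⟨x, hx, hxC⟩ := mem_image.1 hmem
    exact hyC x hx (by rw [← hxC]; exact mem_insert_self (y x) _)
  obtain ⟨z, hz⟩ := hci.exists_forall_mem (D := insert C ((C ∩ A).image (exchange y A)))
    (U := C ∪ A ∪ (C ∩ A).image y)
    (insert_subset hC (hy.image_exchange_subset inter_subset_right))
    (by rw [card_insert_of_notMem hCJ, hy.card_image_exchange inter_subset_right, hd])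
    (by
      have := card_union_image_add_card_inter_le (y := y) (hF hA) (hF hC) (C ∩ A)
      omega)
    (by
      simp only [forall_mem_insert, forall_mem_image]
      exact ⟨subset_union_left.trans subset_union_left, fun x hx ↦ exchange_subset_union hx⟩)
  simp only [forall_mem_insert, forall_mem_image] at hz
  obtain ⟨hzC, hzJ⟩ := hz
  have hzA : z ∈ A := by
    obtain ⟨x, hx⟩ := hCA
    obtain rfl | hzA := mem_insert.1 (hzJ hx)
    · exact absurd hzC (hyC x hx)
    · exact mem_of_mem_erase hzA
  exact (hy.mem_exchange_iff hzA hzA).1 (hzJ (mem_inter.2 ⟨hzC, hzA⟩)) rfl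

theorem isTripleCover (hy : IsExchange F A y) (hci : CondIntersecting d s F)
    (hF : (F : Set (Finset (Fin n))).Sized k) (hd : 3 ≤ d) (hdk : d ≤ k) (hs : 2 * k + d ≤ s + 3)
    (hA : A ∈ F) : IsTripleCover F A (A ∪ A.image y) := by
  refine ⟨subset_union_left, fun C hC hCA ↦ ?_⟩
  have hmono : #(C ∩ A) ≤ #(C ∩ (A ∪ A.image y)) := by gcongr; exact subset_union_left
  have hdCA : d < #(C ∩ A) + 2 := hy.lt_card_inter_add_two hci hF hdk hs hA hC hCA
  obtain hthree | htwo : 3 ≤ #(C ∩ A) ∨ #(C ∩ A) + 1 = d := by omega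
  · exact hthree.trans hmono
  · obtain ⟨x, hx, hxC⟩ := hy.exists_apply_mem hci hF (by omega) hA hC hCA htwo
    have hxA := (mem_inter.1 hx).2
    have hnew : insert (y x) (C ∩ A) ⊆ C ∩ (A ∪ A.image y) := by
      refine insert_subset (mem_inter.2 ⟨hxC, ?_⟩) (inter_subset_inter_left subset_union_left)
      exact mem_union_right _ (mem_image_of_mem y hxA)
    have := card_le_card hnew
    rw [card_insert_of_notMem fun h ↦ hy.notMem x hxA (mem_inter.1 h).2] at this
    omega

end IsExchange

theorem CondIntersecting.exists_isTripleCover (hci : CondIntersecting d s F)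
    (hF : (F : Set (Finset (Fin n))).Sized k) (hd : 3 ≤ d) (hdk : d ≤ k) (hs : 2 * k + d ≤ s + 3)
    (hA : A ∈ F) (hown : ¬ HasOwnFacet F A) : ∃ W, #W ≤ 2 * k ∧ IsTripleCover F A W := by
  obtain ⟨y, hy⟩ := exists_isExchange hF hA hown
  refine ⟨A ∪ A.image y, ?_, hy.isTripleCover hci hF hd hdk hs hA⟩
  have := card_union_le A (A.image y)
  have := card_image_le (s := A) (f := y)
  have := hF hA
  omega

end CondIntersecting

theorem stmt2 (n k d : ℕ) (hd : 3 ≤ d) (hdk : d ≤ k) (hn : 3 * k ^ 5 ≤ n)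
    (F : Finset (Finset (Fin n))) (hunif : ∀ S ∈ F, S.card = k)
    (hci : CondIntersecting d (2 * k + d - 3) F) :
    F.card ≤ (n - 1).choose (k - 1) := by
  classical
  have hF : (F : Set (Finset (Fin n))).Sized k := fun S hS ↦ hunif S hS
  have hk : 0 < k := by omega
  have hn0 : 0 < n := lt_of_lt_of_le (by positivity) hn
  set G := {A ∈ F | HasOwnFacet F A}
  set H := {A ∈ F | ¬ HasOwnFacet F A}
  have hG : #G * n ≤ #(∂ G) * (n - (k - 1)) := by
    simpa using card_mul_card_le_of_hasOwnFacet (fun A hA ↦ hF (filter_subset _ F hA))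
      fun A hA ↦ (mem_filter.1 hA).2.anti (filter_subset _ F)
  have hH : #H * n ≤ #(univ.powersetCard (k - 1) \ ∂ F) * (n - (k - 1)) := by
    simpa using card_mul_le_of_tripleCovers hF (hd.trans hdk) (by simpa using hn)
      (filter_subset _ F) fun A hA ↦ hci.exists_isTripleCover hF hd hdk (by omega)
        (mem_filter.1 hA).1 (mem_filter.1 hA).2
  refine Nat.le_of_mul_le_mul_right (c := n) ?_ hn0
  calc #F * n = #G * n + #H * n := by rw [← add_mul, card_filter_add_card_filter_not]
    _ ≤ #(∂ F) * (n - (k - 1)) + #(univ.powersetCard (k - 1) \ ∂ F) * (n - (k - 1)) :=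
        add_le_add (hG.trans (by gcongr; exact filter_subset _ F)) hH
    _ = n.choose (k - 1) * (n - (k - 1)) := by
        rw [← add_mul, card_shadow_add_card_nonshadow hF, Fintype.card_fin]
    _ = (n - 1).choose (k - 1) * n := by
        simpa [Nat.sub_add_cancel hn0] using (Nat.choose_mul_succ_eq (n - 1) (k - 1)).symm
end

section
/- Let k ≥ 3 be an integer and let n be an integer with n ≥ k²/(k−1) (equivalently, (k−1)·n ≥ k²). If F is a (k, 2k)-conditionally intersecting family of k-element subsets of [n], then |F| ≤ binomial(n−1, k−1). -/
/-!
Give each member `A` of `F` the weight obtained by summing, over its facets `A \ {x}`, the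
reciprocal of the number of members of `F` containing that facet. The total weight of `F` is the
size of its shadow, hence at most `n.choose (k - 1)`; so `#F ≤ (n - 1).choose (k - 1)` as soon as
every weight is at least `n / (n - k + 1)`.

If some facet of `A` lies in no other member, this facet contributes `1` and the other `k - 1`
facets at least `1 / (n - k + 1)` each, which is exactly what is needed. Otherwise every `x ∈ A` can
be exchanged for a point outside `A`; these exchanges are `k` members with a small union, so they
share a point, which forces all of them to use the same new point `y`. Thus `F` contains all
`k`-subsets of `K = A ∪ {y}`, and applying the hypothesis to `k - 1` of them and one further member
shows that every member of `F` is contained in `K` or disjoint from it. When `n ≤ 2 * k`, there is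
no room for a member disjoint from `K`, so `#F ≤ k + 1`. When `n > 2 * k`, every facet of `A` lies
in at most two members, so `A` has weight at least `k / 2`, which is large enough.
-/

section

open Finset
open scoped FinsetFamily

variable {α : Type*} [DecidableEq α] {F : Finset (Finset α)} {A C K S T : Finset α} {d k s : ℕ}

/-- The notion `CondIntersecting` for families of finsets in an arbitrary type. An empty
intersection is expressed by the absence of a common element, so that the ground set may be
infinite. -/
def ConditionallyIntersecting (d s : ℕ) (F : Finset (Finset α)) : Prop :=
  ∀ D ⊆ F, #D = d → #(D.sup id) ≤ s → ∃ v, ∀ S ∈ D, v ∈ S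

theorem condIntersecting_iff {n : ℕ} {F : Finset (Finset (Fin n))} :
    CondIntersecting d s F ↔ ConditionallyIntersecting d s F := by
  simp [CondIntersecting, ConditionallyIntersecting, eq_empty_iff_forall_notMem, mem_inf]

theorem exists_eq_insert_erase_of_erase_subset {x : α} (hx : x ∈ A) (hcard : #C = #A)
    (hsub : A.erase x ⊆ C) (hne : C ≠ A) : ∃ y ∉ A, insert y (A.erase x) = C := by
  obtain ⟨y, hy, rfl⟩ :=
    exists_eq_insert_iff.2 ⟨hsub, (card_erase_add_one hx).trans hcard.symm⟩
  refine ⟨y, fun hyA ↦ hne ?_, rfl⟩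
  obtain rfl : y = x := by simpa [hyA] using hy
  exact insert_erase hx

namespace ConditionallyIntersecting

theorem exists_notMem_forall_eq_of_exchange (hF : ConditionallyIntersecting #A (2 * #A) F)
    {y : α → α} (hy : ∀ x ∈ A, y x ∉ A) (hyF : ∀ x ∈ A, insert (y x) (A.erase x) ∈ F) :
    ∃ z ∉ A, ∀ x ∈ A, y x = z := by
  have hnotMem : ∀ x ∈ A, x ∉ insert (y x) (A.erase x) := fun x hx hmem ↦
    (mem_insert.1 hmem).elim (fun heq ↦ hy x hx (heq ▸ hx)) (notMem_erase x A)
  have hinj : Set.InjOn (fun x ↦ insert (y x) (A.erase x)) A := by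
    intro a ha b _ hab
    by_contra hne
    have hmem : a ∈ insert (y b) (A.erase b) := mem_insert_of_mem (mem_erase.2 ⟨hne, ha⟩)
    exact hnotMem a ha (hab.symm.subset hmem)
  have hunion : (A.image fun x ↦ insert (y x) (A.erase x)).sup id ⊆ A ∪ A.image y := by
    simp only [Finset.sup_le_iff, forall_mem_image]
    exact fun x hx ↦ insert_subset (mem_union_right _ (mem_image_of_mem y hx))
      ((erase_subset x A).trans subset_union_left)
  have hsize : #((A.image fun x ↦ insert (y x) (A.erase x)).sup id) ≤ 2 * #A := by
    linarith [card_le_card hunion, card_union_le A (A.image y), card_image_le (s := A) (f := y)]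
  obtain ⟨v, hv⟩ := hF _ (image_subset_iff.2 hyF) (card_image_of_injOn hinj) hsize
  rw [forall_mem_image] at hv
  have hvA : v ∉ A := fun h ↦ hnotMem v h (hv h)
  exact ⟨v, hvA, fun x hx ↦
    ((mem_insert.1 (hv hx)).resolve_right fun h ↦ hvA (mem_of_mem_erase h)).symm⟩

theorem exists_own_facet_or_shadow_subset (hF : ConditionallyIntersecting k (2 * k) F)
    (hk : (F : Set (Finset α)).Sized k) (hA : A ∈ F) :
    (∃ x ∈ A, ∀ C ∈ F, A.erase x ⊆ C → C = A) ∨ ∃ y ∉ A, ∂ {insert y A} ⊆ F := by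
  refine or_iff_not_imp_left.2 fun h ↦ ?_
  push Not at h
  have hexchange : ∀ x ∈ A, ∃ y, y ∉ A ∧ insert y (A.erase x) ∈ F := by
    intro x hx
    obtain ⟨C, hC, hsub, hne⟩ := h x hx
    obtain ⟨y, hy, rfl⟩ :=
      exists_eq_insert_erase_of_erase_subset hx ((hk hC).trans (hk hA).symm) hsub hne
    exact ⟨y, hy, hC⟩
  choose! y hy hyF using hexchange
  obtain rfl := hk hA
  obtain ⟨z, hz, hyz⟩ := hF.exists_notMem_forall_eq_of_exchange hy hyF
  refine ⟨z, hz, fun S hS ↦ ?_⟩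
  obtain ⟨_, hmem, v, hv, rfl⟩ := mem_shadow_iff.1 hS
  obtain rfl := mem_singleton.1 hmem
  obtain rfl | hvA := mem_insert.1 hv
  · rwa [erase_insert hz]
  · rw [erase_insert_of_ne (ne_of_mem_of_not_mem hvA hz).symm, ← hyz v hvA]
    exact hyF v hvA

theorem subset_of_shadow_subset_of_not_disjoint (hF : ConditionallyIntersecting k (2 * k) F)
    (hK : #K = k + 1) (hKF : ∂ {K} ⊆ F) (hC : C ∈ F) (hCk : #C = k) (hmeet : ¬ Disjoint C K) :
    C ⊆ K := by
  by_contra hCK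
  have hne : (C ∩ K).Nonempty := not_disjoint_iff_nonempty_inter.1 hmeet
  have hlt : #(C ∩ K) < k := hCk ▸
    card_lt_card (ssubset_of_subset_of_ne inter_subset_left (mt inter_eq_left.1 hCK))
  -- Since `C ∩ K ⊆ T`, no point lies in `C` and in all the sets `K \ {v}` with `v ∈ T`.
  obtain ⟨T, hCT, hTK, hT⟩ :=
    exists_subsuperset_card_eq (n := k - 1) (inter_subset_right : C ∩ K ⊆ K) (by omega) (by omega)
  have hsub : insert C (T.image K.erase) ⊆ F := insert_subset hC <| image_subset_iff.2
    fun v hv ↦ hKF (erase_mem_shadow (mem_singleton_self K) (hTK hv))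
  have hcard : #(insert C (T.image K.erase)) = k := by
    have hnotMem : C ∉ T.image K.erase := fun h ↦ by
      obtain ⟨v, -, rfl⟩ := mem_image.1 h
      exact hCK (erase_subset v K)
    rw [card_insert_of_notMem hnotMem, card_image_of_injOn ((erase_injOn K).mono hTK), hT]
    omega
  have hunion : (insert C (T.image K.erase)).sup id ⊆ C ∪ K := by
    simp only [Finset.sup_le_iff, forall_mem_insert, forall_mem_image]
    exact ⟨subset_union_left, fun v _ ↦ (erase_subset v K).trans subset_union_right⟩
  have hsize : #((insert C (T.image K.erase)).sup id) ≤ 2 * k := by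
    have := card_le_card hunion
    have := card_union_add_card_inter C K
    have := hne.card_pos
    omega
  obtain ⟨v, hv⟩ := hF _ hsub hcard hsize
  rw [forall_mem_insert, forall_mem_image] at hv
  obtain ⟨u, hu⟩ := hne
  have hvK : v ∈ K := mem_of_mem_erase (hv.2 (hCT hu))
  exact notMem_erase v K (hv.2 (hCT (mem_inter.2 ⟨hv.1, hvK⟩)))

end ConditionallyIntersecting

/-- The number of members of `F` that contain `S`. -/
def upDegree (F : Finset (Finset α)) (S : Finset α) : ℕ :=
  #{A ∈ F | S ⊆ A}

theorem upDegree_pos (hA : A ∈ F) (hS : S ⊆ A) : 0 < upDegree F S :=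
  card_pos.2 ⟨A, mem_filter.2 ⟨hA, hS⟩⟩

theorem upDegree_le_card_sdiff (hk : (F : Set (Finset α)).Sized (#S + 1))
    (hT : ∀ A ∈ F, S ⊆ A → A ⊆ T) : upDegree F S ≤ #(T \ S) := by
  have hsub : {A ∈ F | S ⊆ A} ⊆ (T \ S).image (insert · S) := by
    intro A hA
    obtain ⟨hAF, hSA⟩ := mem_filter.1 hA
    obtain ⟨a, ha, rfl⟩ := exists_eq_insert_iff.2 ⟨hSA, (hk hAF).symm⟩
    exact mem_image_of_mem _ (mem_sdiff.2 ⟨hT _ hAF hSA (mem_insert_self a S), ha⟩)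
  exact (card_le_card hsub).trans card_image_le

/-- The weight of `A` in `F`, used to count the shadow of `F`: every facet of `A` is shared equally
between the members of `F` containing it. -/
def facetWeight (F : Finset (Finset α)) (A : Finset α) : ℚ :=
  ∑ x ∈ A, (upDegree F (A.erase x) : ℚ)⁻¹

theorem image_erase_eq_filter_shadow (hk : (F : Set (Finset α)).Sized k) (hA : A ∈ F) :
    A.image A.erase = {S ∈ ∂ F | S ⊆ A} := by
  ext S
  simp only [mem_image, mem_filter]
  constructor
  · rintro ⟨x, hx, rfl⟩
    exact ⟨erase_mem_shadow hA hx, erase_subset x A⟩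
  · rintro ⟨hS, hSA⟩
    obtain ⟨B, hB, -, hcard⟩ := mem_shadow_iff_exists_mem_card_add_one.1 hS
    obtain ⟨x, hx, rfl⟩ :=
      exists_eq_insert_iff.2 ⟨hSA, hcard.symm.trans ((hk hB).trans (hk hA).symm)⟩
    exact ⟨x, mem_insert_self x S, erase_insert hx⟩

theorem sum_facetWeight (hk : (F : Set (Finset α)).Sized k) :
    ∑ A ∈ F, facetWeight F A = #(∂ F) := by
  calc ∑ A ∈ F, facetWeight F A
      = ∑ A ∈ F, ∑ S ∈ ∂ F with S ⊆ A, (upDegree F S : ℚ)⁻¹ := by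
        refine sum_congr rfl fun A hA ↦ ?_
        rw [← image_erase_eq_filter_shadow hk hA, sum_image (erase_injOn A), facetWeight]
    _ = ∑ S ∈ ∂ F, ∑ A ∈ F with S ⊆ A, (upDegree F S : ℚ)⁻¹ :=
        sum_comm' fun A S ↦ by simp only [mem_filter]; tauto
    _ = ∑ S ∈ ∂ F, 1 := by
        refine sum_congr rfl fun S hS ↦ ?_
        obtain ⟨A, hA, hSA, -⟩ := mem_shadow_iff_exists_mem_card_add_one.1 hS
        rw [sum_const, nsmul_eq_mul]
        exact mul_inv_cancel₀ (Nat.cast_ne_zero.2 (upDegree_pos hA hSA).ne')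
    _ = #(∂ F) := by simp

theorem inv_le_inv_upDegree {q : ℚ} (hA : A ∈ F) (hS : S ⊆ A) (hq : (upDegree F S : ℚ) ≤ q) :
    q⁻¹ ≤ (upDegree F S : ℚ)⁻¹ :=
  inv_anti₀ (Nat.cast_pos.2 (upDegree_pos hA hS)) hq

theorem half_card_le_facetWeight (hF : ConditionallyIntersecting k (2 * k) F)
    (hk : (F : Set (Finset α)).Sized k) (hk2 : 2 ≤ k) (hA : A ∈ F) {y : α} (hy : y ∉ A)
    (hKF : ∂ {insert y A} ⊆ F) : (k : ℚ) / 2 ≤ facetWeight F A := by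
  have hAk : #A = k := hk hA
  have hdeg : ∀ x ∈ A, upDegree F (A.erase x) ≤ 2 := by
    intro x hx
    have hcard : #(A.erase x) + 1 = k := (card_erase_add_one hx).trans hAk
    have hsub : A.erase x ⊆ insert y A := (erase_subset x A).trans (subset_insert y A)
    obtain ⟨u, hu⟩ : (A.erase x).Nonempty := card_pos.1 (by omega)
    have hinside : ∀ C ∈ F, A.erase x ⊆ C → C ⊆ insert y A := fun C hC hxC ↦
      hF.subset_of_shadow_subset_of_not_disjoint (by rw [card_insert_of_notMem hy, hAk]) hKF hC
        (hk hC) (not_disjoint_iff.2 ⟨u, hxC hu, hsub hu⟩)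
    calc upDegree F (A.erase x) ≤ #(insert y A \ A.erase x) :=
          upDegree_le_card_sdiff (hcard ▸ hk) hinside
      _ = 2 := by rw [card_sdiff_of_subset hsub, card_insert_of_notMem hy]; omega
  have hsum : #A • (2 : ℚ)⁻¹ ≤ facetWeight F A := card_nsmul_le_sum _ _ _ fun x hx ↦
    inv_le_inv_upDegree hA (erase_subset x A) (mod_cast hdeg x hx)
  rwa [nsmul_eq_mul, hAk, ← div_eq_mul_inv] at hsum

variable [Fintype α]

theorem upDegree_erase_add_le (hk : (F : Set (Finset α)).Sized k) (hA : A ∈ F) {x : α}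
    (hx : x ∈ A) : upDegree F (A.erase x) + k ≤ Fintype.card α + 1 := by
  have hcard : #(A.erase x) + 1 = k := (card_erase_add_one hx).trans (hk hA)
  have hle := upDegree_le_card_sdiff (T := univ) (hcard.symm ▸ hk) fun C _ _ ↦ subset_univ C
  rw [card_sdiff_of_subset (subset_univ _), card_univ] at hle
  have := card_le_univ (A.erase x)
  omega

theorem card_le_mul_facetWeight_of_own_facet (hk : (F : Set (Finset α)).Sized k) (hA : A ∈ F)
    {x : α} (hx : x ∈ A) (hown : ∀ C ∈ F, A.erase x ⊆ C → C = A) :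
    (Fintype.card α : ℚ) ≤ (Fintype.card α - k + 1) * facetWeight F A := by
  have hAk : #A = k := hk hA
  have hcard : #(A.erase x) + 1 = k := (card_erase_add_one hx).trans hAk
  have hkα : (k : ℚ) ≤ Fintype.card α := mod_cast hAk ▸ card_le_univ A
  have hfacet : (1 : ℚ) ≤ (upDegree F (A.erase x) : ℚ)⁻¹ := by
    have hle := upDegree_le_card_sdiff (T := A) (hcard.symm ▸ hk)
      fun C hC hxC ↦ (hown C hC hxC).subset
    rw [sdiff_erase_self hx, card_singleton] at hle
    simpa using inv_le_inv_upDegree hA (erase_subset x A) (q := 1) (mod_cast hle)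
  have hother : ∀ u ∈ A.erase x,
      (Fintype.card α - k + 1 : ℚ)⁻¹ ≤ (upDegree F (A.erase u) : ℚ)⁻¹ := by
    intro u hu
    have hle : (upDegree F (A.erase u) + k : ℚ) ≤ Fintype.card α + 1 :=
      mod_cast upDegree_erase_add_le hk hA (mem_of_mem_erase hu)
    exact inv_le_inv_upDegree hA (erase_subset u A) (by linarith)
  have hsum := card_nsmul_le_sum _ _ _ hother
  have hcast : (#(A.erase x) : ℚ) = k - 1 := eq_sub_of_add_eq (mod_cast hcard)
  rw [nsmul_eq_mul, hcast] at hsum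
  have hpos : (0 : ℚ) < Fintype.card α - k + 1 := by linarith
  calc (Fintype.card α : ℚ)
      = (Fintype.card α - k + 1) * (1 + (k - 1) * (Fintype.card α - k + 1 : ℚ)⁻¹) := by
        field_simp
        ring
    _ ≤ (Fintype.card α - k + 1) * facetWeight F A := by
        rw [facetWeight, ← add_sum_erase A _ hx]
        gcongr

theorem card_le_mul_facetWeight_of_shadow_subset (hF : ConditionallyIntersecting k (2 * k) F)
    (hk : (F : Set (Finset α)).Sized k) (hk3 : 3 ≤ k) (hn : 2 * k < Fintype.card α) (hA : A ∈ F)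
    {y : α} (hy : y ∉ A) (hKF : ∂ {insert y A} ⊆ F) :
    (Fintype.card α : ℚ) ≤ (Fintype.card α - k + 1) * facetWeight F A := by
  have hk3' : (3 : ℚ) ≤ k := mod_cast hk3
  have hn' : (2 * k + 1 : ℚ) ≤ Fintype.card α := mod_cast hn
  calc (Fintype.card α : ℚ) ≤ (Fintype.card α - k + 1) * (k / 2) := by nlinarith
    _ ≤ (Fintype.card α - k + 1) * facetWeight F A := mul_le_mul_of_nonneg_left
        (half_card_le_facetWeight hF hk (by omega) hA hy hKF) (by linarith)

theorem card_le_choose_of_forall_le_facetWeight (hk : (F : Set (Finset α)).Sized k) (hk0 : 0 < k)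
    (hkα : k ≤ Fintype.card α)
    (hw : ∀ A ∈ F, (Fintype.card α : ℚ) ≤ (Fintype.card α - k + 1) * facetWeight F A) :
    #F ≤ (Fintype.card α - 1).choose (k - 1) := by
  have hshadow : #(∂ F) ≤ (Fintype.card α).choose (k - 1) := hk.shadow.card_le
  obtain ⟨j, rfl⟩ := Nat.exists_eq_add_one.2 hk0
  obtain ⟨m, hm⟩ := Nat.exists_eq_add_one.2 (hk0.trans_le hkα)
  rw [hm] at hw hshadow hkα ⊢
  simp only [Nat.add_sub_cancel] at hshadow ⊢
  have hcast : ((m + 1 : ℕ) : ℚ) - (j + 1 : ℕ) + 1 = (m + 1 - j : ℕ) := by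
    rw [Nat.cast_sub (by omega)]
    push_cast
    ring
  rw [hcast] at hw
  have hcount : #F * (m + 1) ≤ (m + 1 - j) * #(∂ F) := by
    have := card_nsmul_le_sum _ _ _ hw
    rw [← mul_sum, sum_facetWeight hk, nsmul_eq_mul] at this
    exact_mod_cast this
  refine Nat.le_of_mul_le_mul_right (c := m + 1) ?_ m.succ_pos
  calc #F * (m + 1) ≤ (m + 1 - j) * (m + 1).choose j := hcount.trans (by gcongr)
    _ = m.choose j * (m + 1) := by rw [Nat.choose_mul_succ_eq, mul_comm]

theorem card_le_add_one_of_shadow_subset (hF : ConditionallyIntersecting k (2 * k) F)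
    (hk : (F : Set (Finset α)).Sized k) (hn : Fintype.card α ≤ 2 * k) (hK : #K = k + 1)
    (hKF : ∂ {K} ⊆ F) : #F ≤ k + 1 := by
  have hsub : F ⊆ K.powersetCard k := by
    intro C hC
    have hmeet : ¬ Disjoint C K := fun hdisj ↦ by
      have hle := card_le_univ (C ∪ K)
      rw [card_union_of_disjoint hdisj, hk hC, hK] at hle
      omega
    exact mem_powersetCard.2 ⟨hF.subset_of_shadow_subset_of_not_disjoint hK hKF hC (hk hC) hmeet,
      hk hC⟩
  simpa [hK] using card_le_card hsub

theorem add_one_le_choose_pred {n : ℕ} (hk : 2 ≤ k) (hn : k + 2 ≤ n) :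
    k + 1 ≤ (n - 1).choose (k - 1) := by
  calc k + 1 ≤ (k + 1) * k / 2 := (Nat.le_div_iff_mul_le two_pos).2 (Nat.mul_le_mul_left _ hk)
    _ = (k + 1).choose 2 := by rw [Nat.choose_two_right, Nat.add_sub_cancel]
    _ = (k + 1).choose (k - 1) := (Nat.choose_symm_of_eq_add (by omega)).symm
    _ ≤ (n - 1).choose (k - 1) := Nat.choose_le_choose _ (by omega)

theorem add_two_le_of_sq_le_pred_mul {n : ℕ} (hk : 2 ≤ k) (hn : k ^ 2 ≤ (k - 1) * n) :
    k + 2 ≤ n := by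
  obtain ⟨j, rfl⟩ := Nat.exists_eq_add_of_le' (show 1 ≤ k by omega)
  rw [Nat.add_sub_cancel] at hn
  by_contra! hlt
  nlinarith [Nat.mul_le_mul_left j (Nat.le_of_lt_succ hlt)]

theorem stmt3_general (hk : 3 ≤ k) (hn : k ^ 2 ≤ (k - 1) * Fintype.card α)
    (hunif : (F : Set (Finset α)).Sized k) (hF : ConditionallyIntersecting k (2 * k) F) :
    #F ≤ (Fintype.card α - 1).choose (k - 1) := by
  have hkn : k + 2 ≤ Fintype.card α := add_two_le_of_sq_le_pred_mul (by omega) hn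
  by_cases hsmall : Fintype.card α ≤ 2 * k ∧ ∃ K, #K = k + 1 ∧ ∂ {K} ⊆ F
  · obtain ⟨hn2, K, hK, hKF⟩ := hsmall
    exact (card_le_add_one_of_shadow_subset hF hunif hn2 hK hKF).trans
      (add_one_le_choose_pred (by omega) hkn)
  · refine card_le_choose_of_forall_le_facetWeight hunif (by omega) (by omega) fun A hA ↦ ?_
    obtain ⟨x, hx, hown⟩ | ⟨y, hy, hKF⟩ := hF.exists_own_facet_or_shadow_subset hunif hA
    · exact card_le_mul_facetWeight_of_own_facet hunif hA hx hown
    · have hn2 : 2 * k < Fintype.card α := lt_of_not_ge fun hle ↦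
        hsmall ⟨hle, insert y A, by rw [card_insert_of_notMem hy, hunif hA], hKF⟩
      exact card_le_mul_facetWeight_of_shadow_subset hF hunif hk hn2 hA hy hKF

end

theorem stmt3 (n k : ℕ) (hk : 3 ≤ k) (hn : k ^ 2 ≤ (k - 1) * n)
    (F : Finset (Finset (Fin n))) (hunif : ∀ S ∈ F, S.card = k)
    (hci : CondIntersecting k (2 * k) F) :
    F.card ≤ (n - 1).choose (k - 1) := by
  simpa using stmt3_general hk (by simpa using hn) hunif (condIntersecting_iff.1 hci)
end

section
/- Let k ≥ 3 be an integer and let n ≥ 3k·binomial(2k, k). If F is a family of k-element subsets of [n] that is (3, 2k)-conditionally intersecting but not intersecting (i.e., F contains two disjoint members), then |F| ≤ binomial(n−k−1, k−1) + 1. -/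
/-! Through a point `z`, a member `A` of `F` that meets some other member exactly in `{z}` is the
only member containing `A \ {z}`, since a second one would complete a forbidden triple. Hence
`k * #F ≤ C(n, k - 1) + ∑ z, #(thickStar F z)`, where the thick star of `z` collects the remaining
members through `z`. A large thick star forces a companion `x` of `z`: a second point on every
member through `z`. If `#F ≥ C(n - k - 1, k - 1)`, some `z` has a companion `x` and nearly
`C(n - 2, k - 2)` members through it. Then every point of a member avoiding `x` has a small thick
star or lies on few of the members through `z`, for otherwise it would have a companion too and
many members would contain four given points. By counting, the members avoiding `x` thus lie in a
set `Y` of size `O(k ^ 2)`.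

A member `B` through `x` meeting `Y` inside some member `A ⊆ Y` excludes from `F` every `k`-set
`D ⊇ B \ Y` disjoint from `Y`, because `A ∪ B ∪ D = A ∪ D`. Double counting these exclusions shows
that such sets `B` cost more than they bring. With `Y` a single member avoiding `x`, the degree of
`x` is at most `C(n - k - 1, k - 1)`, and if at least two members avoid `x`, then
`#Y > k` and the same count with the full set `Y` gives `#F ≤ C(n - k - 1, k - 1)`.
-/

open Finset

section Binomial

theorem mul_choose_sub_one {a b : ℕ} (ha : 0 < a) (hb : 0 < b) :
    a * (a - 1).choose (b - 1) = b * a.choose b := by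
  obtain ⟨a, rfl⟩ := Nat.exists_eq_add_one.mpr ha
  obtain ⟨b, rfl⟩ := Nat.exists_eq_add_one.mpr hb
  rw [Nat.add_sub_cancel, Nat.add_sub_cancel, Nat.add_one_mul_choose_eq, mul_comm]

theorem mul_choose_lt_choose_succ_succ {a b t : ℕ} (hba : b ≤ a) (h : t * (b + 1) < a + 1) :
    t * a.choose b < (a + 1).choose (b + 1) := by
  refine Nat.lt_of_mul_lt_mul_right (a := b + 1) ?_
  calc t * a.choose b * (b + 1) = t * (b + 1) * a.choose b := by ring
    _ < (a + 1) * a.choose b := Nat.mul_lt_mul_of_pos_right h (Nat.choose_pos hba)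
    _ = (a + 1).choose (b + 1) * (b + 1) := Nat.add_one_mul_choose_eq a b

theorem choose_add_mul_choose_le_choose_add (a c t : ℕ) :
    a.choose (c + 1) + t * a.choose c ≤ (a + t).choose (c + 1) := by
  induction t with
  | zero => simp
  | succ t ih =>
    have hmono : a.choose c ≤ (a + t).choose c := Nat.choose_le_choose c (Nat.le_add_right a t)
    rw [← add_assoc, Nat.choose_succ_succ' (a + t)]
    linarith

theorem choose_add_succ_le (a c t : ℕ) :
    (a + t + 1).choose (c + 1) ≤ a.choose (c + 1) + (t + 1) * (a + t).choose c := by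
  induction t with
  | zero => rw [add_zero, Nat.choose_succ_succ']; omega
  | succ t ih =>
    have hmono : (a + t).choose c ≤ (a + t + 1).choose c := Nat.choose_le_choose c (Nat.le_succ _)
    rw [← add_assoc, Nat.choose_succ_succ' (a + t + 1)]
    nlinarith

theorem choose_four_le_two_mul_centralBinom (k : ℕ) :
    (2 * k + 1).choose 4 ≤ 2 * k.centralBinom := by
  rw [Nat.choose_succ_succ' (2 * k) 3, two_mul k.centralBinom]
  exact add_le_add (Nat.choose_le_centralBinom 3 k) (Nat.choose_le_centralBinom 4 k)

theorem mul_choose_eq_mul_choose_sub_three {k m : ℕ} (hk : 3 ≤ k) (hkm : k ≤ m) :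
    k * (k - 1) * (k - 2) * m.choose k = m * (m - 1) * (m - 2) * (m - 3).choose (k - 3) := by
  have h₀ : m * (m - 1).choose (k - 1) = k * m.choose k :=
    mul_choose_sub_one (by omega) (by omega)
  have h₁ : (m - 1) * (m - 2).choose (k - 2) = (k - 1) * (m - 1).choose (k - 1) :=
    mul_choose_sub_one (a := m - 1) (b := k - 1) (by omega) (by omega)
  have h₂ : (m - 2) * (m - 3).choose (k - 3) = (k - 2) * (m - 2).choose (k - 2) :=
    mul_choose_sub_one (a := m - 2) (b := k - 2) (by omega) (by omega)
  calc k * (k - 1) * (k - 2) * m.choose k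
      = (k - 2) * ((k - 1) * (k * m.choose k)) := by ring
    _ = m * (m - 1) * ((k - 2) * (m - 2).choose (k - 2)) := by
        rw [← h₀, mul_left_comm (k - 1), ← h₁]; ring
    _ = m * (m - 1) * (m - 2) * (m - 3).choose (k - 3) := by rw [← h₂]; ring

end Binomial

section Threshold

variable {n k : ℕ}

theorem quintic_le_of_mul_choose_le (hn : 3 * k * (2 * k).choose k ≤ n) :
    k ^ 2 * (k - 1) * (2 * k - 1) * (2 * k + 1) ≤ 4 * n := by
  have hdesc : (2 * k + 1) * (2 * k) * (2 * k - 1) * (2 * k - 2) = 24 * (2 * k + 1).choose 4 := by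
    rw [show 24 = Nat.factorial 4 from rfl, ← Nat.descFactorial_eq_factorial_mul_choose]
    simp only [Nat.descFactorial_succ, Nat.descFactorial_zero, tsub_zero]
    rw [show 2 * k + 1 - 3 = 2 * k - 2 by omega, show 2 * k + 1 - 2 = 2 * k - 1 by omega,
      show 2 * k + 1 - 1 = 2 * k by omega]
    ring
  have hcentral : (2 * k + 1).choose 4 ≤ 2 * (2 * k).choose k :=
    choose_four_le_two_mul_centralBinom k
  have htwo : 2 * k - 2 = 2 * (k - 1) := by omega
  rw [htwo] at hdesc
  refine Nat.le_of_mul_le_mul_left (c := 4) ?_ (by norm_num)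
  calc 4 * (k ^ 2 * (k - 1) * (2 * k - 1) * (2 * k + 1))
      = k * ((2 * k + 1) * (2 * k) * (2 * k - 1) * (2 * (k - 1))) := by ring
    _ = 24 * k * (2 * k + 1).choose 4 := by rw [hdesc]; ring
    _ ≤ 24 * k * (2 * (2 * k).choose k) := Nat.mul_le_mul_left _ hcentral
    _ ≤ 4 * (4 * n) := by linarith

theorem quadratic_add_cubic_le {K M N : ℝ} (hK : 3 ≤ K) (hKM : K + 1 ≤ M) (hM : M ≤ 2 * (K ^ 2 + 3))
    (hN : K ^ 2 * (K - 1) * (2 * K - 1) * (2 * K + 1) ≤ 4 * N) :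
    K * (K - 1) * (K - 2) * (M * (M - 1) / 2) + M * (M - 1) * (M - 2) ≤
      K * (K - 1) * (M - K) * (N - 2 - (K - 2) * (M - 1)) := by
  obtain ⟨t, rfl⟩ : ∃ t, K = t + 3 := ⟨K - 3, by ring⟩
  obtain ⟨s, rfl⟩ : ∃ s, M = t + 4 + s := ⟨M - (t + 4), by ring⟩
  have ht : 0 ≤ t := by linarith
  have hs : 0 ≤ s := by linarith
  have hgap : 0 ≤ 2 * t ^ 2 + 11 * t + 20 - s := by nlinarith
  have hN' := mul_le_mul_of_nonneg_left hN
    (show 0 ≤ (t + 3) * (t + 2) * (s + 1) by positivity)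
  -- For the least admissible `N` the slack is a cubic in `s`, split into a linear part `hend` and a
  -- multiple `hconcave` of `s * (S - s)`, where `S = 2 * t ^ 2 + 11 * t + 20` is the bound on `s`.
  have hend : 0 ≤ (3420 + 9504 * t + 11131 * t ^ 2 + 7143 * t ^ 3 + 2717 * t ^ 4 + 613 * t ^ 5
        + 76 * t ^ 6 + 4 * t ^ 7)
      + s * (408 + 5550 * t + 8787 * t ^ 2 + 6387 * t ^ 3 + 2585 * t ^ 4 + 603 * t ^ 5
        + 76 * t ^ 6 + 4 * t ^ 7) := by positivity
  have hconcave : 0 ≤ s * (2 * t ^ 2 + 11 * t + 20 - s) *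
      (36 + 39 * t + 18 * t ^ 2 + 3 * t ^ 3 + 2 * (2 * t ^ 2 + 11 * t + 20 + s)) := by positivity
  linarith

theorem choose_add_le_of_mul_choose_le (hk : 0 < k) (hn : 3 * k * (2 * k).choose k ≤ n) :
    (2 * k).choose k + 2 * k ≤ n := by
  have hpos : 0 < (2 * k).choose k := Nat.choose_pos (by omega)
  nlinarith

variable (hk : 3 ≤ k) (hn : k ^ 2 * (k - 1) * (2 * k - 1) * (2 * k + 1) ≤ 4 * n)
include hk hn

theorem quintic_lt : (k ^ 2 + 4) * (k - 1) ^ 2 * (k - 2) + 2 < n := by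
  obtain ⟨j, rfl⟩ := Nat.exists_eq_add_of_le' hk
  simp only [Nat.reduceSubDiff, show 2 * (j + 3) - 1 = 2 * j + 5 by omega] at hn ⊢
  refine Nat.lt_of_mul_lt_mul_left (a := 4) (lt_of_lt_of_le ?_ hn)
  ring_nf
  nlinarith [Nat.zero_le j, Nat.zero_le (j ^ 2), Nat.zero_le (j ^ 3), Nat.zero_le (j ^ 4)]

theorem cubic_le : (k + 1) * (2 * (k ^ 2 + 3)) + k ≤ n := by
  obtain ⟨j, rfl⟩ := Nat.exists_eq_add_of_le' hk
  simp only [Nat.reduceSubDiff, show 2 * (j + 3) - 1 = 2 * j + 5 by omega] at hn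
  refine Nat.le_of_mul_le_mul_left (c := 4) (le_trans ?_ hn) (by norm_num)
  ring_nf
  nlinarith [Nat.zero_le j, Nat.zero_le (j ^ 2), Nat.zero_le (j ^ 3), Nat.zero_le (j ^ 4),
    Nat.zero_le (j ^ 5)]

theorem mul_choose_lt_choose_sub_two :
    (k ^ 2 + 4) * ((k - 1) ^ 2 * (n - 3).choose (k - 3)) < (n - 2).choose (k - 2) := by
  have hquintic := quintic_lt hk hn
  have hcubic := cubic_le hk hn
  have hkn : k ≤ n := by omega
  have h := mul_choose_lt_choose_succ_succ (a := n - 3) (b := k - 3)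
    (t := (k ^ 2 + 4) * (k - 1) ^ 2) (by omega)
  rw [show n - 3 + 1 = n - 2 by omega, show k - 3 + 1 = k - 2 by omega, mul_assoc] at h
  rw [← mul_assoc] at h ⊢
  exact h (by omega)

theorem choose_two_mul_choose_add_choose_le {m : ℕ} (hkm : k < m) (hm : m ≤ 2 * (k ^ 2 + 3)) :
    m.choose 2 * (n - 3).choose (k - 3) + m.choose k ≤ (m - k) * (n - m - 1).choose (k - 2) := by
  have hcubic := cubic_le hk hn
  have hmn : m + k ≤ n := by nlinarith
  have hupper : (n - 2).choose (k - 2) ≤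
      (n - m - 1).choose (k - 2) + (m - 1) * (n - 3).choose (k - 3) := by
    have h := choose_add_succ_le (n - m - 1) (k - 3) (m - 2)
    rwa [show k - 3 + 1 = k - 2 by omega, show n - m - 1 + (m - 2) + 1 = n - 2 by omega,
      show n - m - 1 + (m - 2) = n - 3 by omega, show m - 2 + 1 = m - 1 by omega] at h
  have habsorb : (n - 2) * (n - 3).choose (k - 3) = (k - 2) * (n - 2).choose (k - 2) :=
    mul_choose_sub_one (a := n - 2) (b := k - 2) (by omega) (by omega)
  have hthree : k * (k - 1) * (k - 2) * m.choose k ≤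
      m * (m - 1) * (m - 2) * (n - 3).choose (k - 3) := by
    rw [mul_choose_eq_mul_choose_sub_three hk hkm.le]
    gcongr
    omega
  rify [show 1 ≤ k by omega, show 2 ≤ k by omega, show 1 ≤ m by omega, show 2 ≤ m by omega,
    show 2 ≤ n by omega, hkm.le, show 1 ≤ 2 * k by omega] at hk hn hkm hm hupper habsorb hthree ⊢
  rw [Nat.cast_choose_two]
  have hpoly := mul_le_mul_of_nonneg_right (quadratic_add_cubic_le hk (by exact_mod_cast hkm) hm hn)
    (show (0 : ℝ) ≤ (n - 3).choose (k - 3) by positivity)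
  have hpos : (0 : ℝ) < k * (k - 1) * (k - 2) :=
    mul_pos (mul_pos (by linarith) (by linarith)) (by linarith)
  refine le_of_mul_le_mul_left ?_ hpos
  have hscaled := mul_le_mul_of_nonneg_left hupper
    (mul_nonneg hpos.le (sub_nonneg.2 hkm.le))
  linear_combination hpoly + hthree + hscaled + (k : ℝ) * (k - 1) * (m - k) * habsorb

theorem choose_add_mul_choose_add_choose_le {m : ℕ} (hkm : k < m) (hm : m ≤ 2 * (k ^ 2 + 3)) :
    (n - m - 1).choose (k - 1) + m.choose 2 * (n - 3).choose (k - 3) + m.choose k ≤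
      (n - k - 1).choose (k - 1) := by
  have hcubic := cubic_le hk hn
  have hmn : m + k ≤ n := by nlinarith
  have hlower : (n - m - 1).choose (k - 1) + (m - k) * (n - m - 1).choose (k - 2) ≤
      (n - k - 1).choose (k - 1) := by
    have h := choose_add_mul_choose_le_choose_add (n - m - 1) (k - 2) (m - k)
    rwa [show k - 2 + 1 = k - 1 by omega, show n - m - 1 + (m - k) = n - k - 1 by omega] at h
  have hupper := choose_two_mul_choose_add_choose_le hk hn hkm hm
  linarith

end Threshold

section Sized

variable {α : Type*} {k : ℕ} {F : Finset (Finset α)}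

theorem card_le_choose_of_forall_subset [Fintype α] {T : Finset α}
    (hF : (F : Set (Finset α)).Sized k) (hT : ∀ A ∈ F, T ⊆ A) :
    #F ≤ (Fintype.card α - #T).choose (k - #T) := by
  classical
  obtain rfl | ⟨A₀, hA₀⟩ := F.eq_empty_or_nonempty
  · simp
  have hTk : #T ≤ k := hF hA₀ ▸ card_le_card (hT A₀ hA₀)
  calc #F ≤ #{A ∈ powersetCard k univ | T ⊆ A} := card_le_card fun A hA ↦
        mem_filter.2 ⟨mem_powersetCard_univ.2 (hF hA), hT A hA⟩
    _ = (Fintype.card α - #T).choose (k - #T) :=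
        card_filter_powersetCard_subset T univ k (subset_univ T) hTk

theorem exists_notMem_of_disjoint {A B : Finset α} (hA : A ∈ F) (hB : B ∈ F)
    (hAB : Disjoint A B) (x : α) : ∃ A ∈ F, x ∉ A := by
  by_contra! hx
  exact disjoint_left.1 hAB (hx A hA) (hx B hB)

variable [DecidableEq α]

theorem sum_card_filter_mem (F : Finset (Finset α)) (s : Finset α) :
    ∑ w ∈ s, #{A ∈ F | w ∈ A} = ∑ A ∈ F, #(A ∩ s) := by
  simp_rw [inter_comm _ s, ← filter_mem_eq_inter]
  exact sum_card_bipartiteAbove_eq_sum_card_bipartiteBelow (fun w A ↦ w ∈ A)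

theorem card_filter_mem_powersetCard_le {s : Finset α} {x : α} (hx : x ∈ s) (k : ℕ) :
    #{D ∈ powersetCard k s | x ∈ D} ≤ (#s - 1).choose (k - 1) := by
  have hmaps : ∀ D ∈ {D ∈ powersetCard k s | x ∈ D},
      D.erase x ∈ powersetCard (k - 1) (s.erase x) := by
    intro D hD
    obtain ⟨⟨hDs, hDk⟩, hxD⟩ := by simpa only [mem_filter, mem_powersetCard] using hD
    exact mem_powersetCard.2 ⟨erase_subset_erase x hDs, by rw [card_erase_of_mem hxD, hDk]⟩
  refine (card_le_card_of_injOn _ hmaps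
    ((erase_injOn' x).mono fun D hD ↦ (mem_filter.1 hD).2)).trans_eq ?_
  rw [card_powersetCard, card_erase_of_mem hx]

theorem lt_card_filter_powersetCard_compl [Fintype α] {B Y : Finset α} {c : ℕ}
    (hc : c + #Y + #B ≤ Fintype.card α) (hBY : ¬Disjoint B Y) :
    c < #{D ∈ powersetCard #B Yᶜ | B \ Y ⊆ D} := by
  have hpos : 0 < #(B ∩ Y) := card_pos.2 (not_disjoint_iff_nonempty_inter.1 hBY)
  have hsplit : #(B \ Y) + #(B ∩ Y) = #B := card_sdiff_add_card_inter B Y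
  have hsub : B \ Y ⊆ Yᶜ := by rw [sdiff_eq_inter_compl]; exact inter_subset_right
  rw [card_filter_powersetCard_subset _ _ _ hsub (by omega), card_compl,
    show #B - #(B \ Y) = #(B ∩ Y) by omega]
  calc c < c + 1 := Nat.lt_succ_self c
    _ = (c + 1).choose c := (Nat.choose_succ_self_right c).symm
    _ ≤ (c + #(B ∩ Y)).choose c := Nat.choose_le_choose c (by omega)
    _ = (c + #(B ∩ Y)).choose #(B ∩ Y) := Nat.choose_symm_add
    _ ≤ (Fintype.card α - #Y - #(B \ Y)).choose #(B ∩ Y) := Nat.choose_le_choose _ (by omega)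

theorem card_filter_inter_eq_one_le {D Y : Finset α} (hF : (F : Set (Finset α)).Sized k)
    (hD : #D = k) : #{B ∈ F | #(B ∩ Y) = 1 ∧ B \ Y ⊆ D} ≤ k * #Y := by
  have hmaps : ∀ B ∈ {B ∈ F | #(B ∩ Y) = 1 ∧ B \ Y ⊆ D},
      (B ∩ Y, D \ (B \ Y)) ∈ powersetCard 1 Y ×ˢ powersetCard 1 D := by
    intro B hB
    obtain ⟨hBF, hone, hsub⟩ := mem_filter.1 hB
    have hsplit : #(B \ Y) + #(B ∩ Y) = #B := card_sdiff_add_card_inter B Y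
    have hBk : #B = k := hF hBF
    have hcompl : #(D \ (B \ Y)) = 1 := by rw [card_sdiff_of_subset hsub]; omega
    exact mem_product.2 ⟨mem_powersetCard.2 ⟨inter_subset_right, hone⟩,
      mem_powersetCard.2 ⟨sdiff_subset, hcompl⟩⟩
  have hinj : Set.InjOn (fun B ↦ (B ∩ Y, D \ (B \ Y)))
      ({B ∈ F | #(B ∩ Y) = 1 ∧ B \ Y ⊆ D} : Finset (Finset α)) := by
    intro B hB B' hB' hBB'
    obtain ⟨hinter, hcompl⟩ := Prod.ext_iff.1 hBB'
    have hsdiff : B \ Y = B' \ Y := by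
      rw [← Finset.sdiff_sdiff_eq_self (mem_filter.1 hB).2.2,
        ← Finset.sdiff_sdiff_eq_self (mem_filter.1 hB').2.2]
      exact congrArg (D \ ·) hcompl
    rw [← sdiff_union_inter B Y, ← sdiff_union_inter B' Y]
    exact congrArg₂ (· ∪ ·) hsdiff hinter
  have hle := card_le_card_of_injOn _ hmaps hinj
  rwa [card_product, card_powersetCard, card_powersetCard, Nat.choose_one_right,
    Nat.choose_one_right, hD, mul_comm] at hle

theorem card_filter_mem_one_lt_inter_le [Fintype α] {x : α} {Y : Finset α}
    (hF : (F : Set (Finset α)).Sized k) (hxY : x ∉ Y) :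
    #{B ∈ F | x ∈ B ∧ 1 < #(B ∩ Y)} ≤
      (#Y).choose 2 * (Fintype.card α - 3).choose (k - 3) := by
  have hsub : {B ∈ F | x ∈ B ∧ 1 < #(B ∩ Y)} ⊆
      (powersetCard 2 Y).biUnion fun p ↦ {B ∈ F | insert x p ⊆ B} := by
    intro B hB
    obtain ⟨hBF, hxB, htwo⟩ := mem_filter.1 hB
    obtain ⟨p, hp, hpcard⟩ := exists_subset_card_eq htwo
    obtain ⟨hpB, hpY⟩ := subset_inter_iff.1 hp
    exact mem_biUnion.2 ⟨p, mem_powersetCard.2 ⟨hpY, hpcard⟩,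
      mem_filter.2 ⟨hBF, insert_subset hxB hpB⟩⟩
  rw [← card_powersetCard]
  refine (card_le_card hsub).trans (card_biUnion_le_card_mul _ _ _ fun p hp ↦ ?_)
  obtain ⟨hpY, hpcard⟩ := mem_powersetCard.1 hp
  have hthree : #(insert x p) = 3 := by rw [card_insert_of_notMem (fun h ↦ hxY (hpY h)), hpcard]
  rw [← hthree]
  exact card_le_choose_of_forall_subset (hF.mono (coe_subset.2 (filter_subset _ _)))
    fun B hB ↦ (mem_filter.1 hB).2

/-- The union of the members of `F` avoiding `x`; its size measures how far `F` is from a star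
centred at `x`. -/
def offSupport (F : Finset (Finset α)) (x : α) : Finset α :=
  {A ∈ F | x ∉ A}.biUnion id

theorem mem_offSupport {x w : α} : w ∈ offSupport F x ↔ ∃ A ∈ F, x ∉ A ∧ w ∈ A := by
  simp [offSupport, and_assoc]

theorem subset_offSupport {A : Finset α} {x : α} (hA : A ∈ F) (hx : x ∉ A) :
    A ⊆ offSupport F x :=
  fun _ hw ↦ mem_offSupport.2 ⟨A, hA, hx, hw⟩

theorem notMem_offSupport (F : Finset (Finset α)) (x : α) : x ∉ offSupport F x := fun h ↦
  have ⟨_, _, hx, hx'⟩ := mem_offSupport.1 h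
  hx hx'

theorem card_filter_notMem_le (hF : (F : Set (Finset α)).Sized k) (x : α) :
    #{A ∈ F | x ∉ A} ≤ (#(offSupport F x)).choose k := by
  rw [← card_powersetCard]
  refine card_le_card fun A hA ↦ ?_
  obtain ⟨hAF, hx⟩ := mem_filter.1 hA
  exact mem_powersetCard.2 ⟨subset_offSupport hAF hx, hF hAF⟩

theorem lt_card_offSupport {x : α} (hF : (F : Set (Finset α)).Sized k)
    (hx : 1 < #{A ∈ F | x ∉ A}) : k < #(offSupport F x) := by
  by_contra! hle
  have hone : (#(offSupport F x)).choose k ≤ 1 :=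
    (Nat.choose_le_choose k hle).trans_eq (Nat.choose_self k)
  exact absurd (card_filter_notMem_le hF x) (by omega)

end Sized

namespace CondIntersecting

variable {n k : ℕ} {F : Finset (Finset (Fin n))}

theorem inter_inter_nonempty {s : ℕ} (hci : CondIntersecting 3 s F) {A B C : Finset (Fin n)}
    (hA : A ∈ F) (hB : B ∈ F) (hC : C ∈ F) (hAB : A ≠ B) (hAC : A ≠ C) (hBC : B ≠ C)
    (hcard : #(A ∪ B ∪ C) ≤ s) : (A ∩ B ∩ C).Nonempty := by
  by_contra hempty
  refine hci ⟨{A, B, C}, ?_, card_eq_three.2 ⟨A, B, C, hAB, hAC, hBC, rfl⟩, ?_, ?_⟩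
  · simp [insert_subset_iff, hA, hB, hC]
  · simpa [union_assoc] using hcard
  · simpa [inter_assoc] using hempty

theorem notMem_of_sdiff_subset (hci : CondIntersecting 3 (2 * k) F)
    (hF : (F : Set (Finset (Fin n))).Sized k) {A B D Y : Finset (Fin n)} (hA : A ∈ F) (hAY : A ⊆ Y)
    (hB : B ∈ F) (hBA : B ∩ Y ⊆ A) (hBY : ¬Disjoint B Y) (hBY' : ¬B ⊆ Y) (hD : #D = k)
    (hBD : B \ Y ⊆ D) (hDY : Disjoint D Y) : D ∉ F := by
  intro hDF
  have hcover : A ∪ B ∪ D ⊆ A ∪ D := by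
    intro a ha
    have hmem := @hBA a
    have hmem' := @hBD a
    simp only [mem_union, mem_inter, mem_sdiff] at *
    tauto
  have hcard : #(A ∪ B ∪ D) ≤ 2 * k :=
    calc #(A ∪ B ∪ D) ≤ #(A ∪ D) := card_le_card hcover
      _ ≤ #A + #D := card_union_le A D
      _ = 2 * k := by rw [hF hA, hD, two_mul]
  have hAB : A ≠ B := fun h ↦ hBY' (h ▸ hAY)
  have hBD' : B ≠ D := fun h ↦ hBY (h ▸ hDY)
  have hAD : A ≠ D := by
    rintro rfl
    obtain ⟨a, haB, haY⟩ := not_disjoint_iff.1 hBY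
    exact disjoint_left.1 hDY (hBA (mem_inter.2 ⟨haB, haY⟩)) haY
  obtain ⟨a, ha⟩ := hci.inter_inter_nonempty hA hB hDF hAB hAD hBD' hcard
  simp only [mem_inter] at ha
  exact disjoint_left.1 hDY ha.2 (hAY ha.1.1)

theorem lt_card_filter_sdiff_subset (hci : CondIntersecting 3 (2 * k) F)
    (hF : (F : Set (Finset (Fin n))).Sized k) {A B Y : Finset (Fin n)} {c : ℕ}
    (hn : c + #Y + k ≤ n) (hA : A ∈ F) (hAY : A ⊆ Y) (hB : B ∈ F) (hBA : B ∩ Y ⊆ A)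
    (hBY : ¬Disjoint B Y) (hBY' : ¬B ⊆ Y) :
    c < #{D ∈ powersetCard k Yᶜ \ F | B \ Y ⊆ D} := by
  refine (lt_card_filter_powersetCard_compl (by simpa [hF hB] using hn) hBY).trans_le
    (card_le_card fun D hD ↦ ?_)
  rw [hF hB] at hD
  obtain ⟨hD, hBD⟩ := mem_filter.1 hD
  obtain ⟨hDY, hDk⟩ := mem_powersetCard.1 hD
  exact mem_filter.2 ⟨mem_sdiff.2 ⟨hD, hci.notMem_of_sdiff_subset hF hA hAY hB hBA hBY hBY' hDk hBD
    (subset_compl_iff_disjoint_right.1 hDY)⟩, hBD⟩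

theorem card_add_card_filter_disjoint_le (hci : CondIntersecting 3 (2 * k) F)
    (hF : (F : Set (Finset (Fin n))).Sized k) {S : Finset (Finset (Fin n))} {Y : Finset (Fin n)}
    {x : Fin n} {c : ℕ} (hn : c + #Y + k ≤ n) (hxY : x ∉ Y) (hSF : S ⊆ F) (hSx : ∀ B ∈ S, x ∈ B)
    (hSY : ∀ B ∈ S, ¬Disjoint B Y) (hSA : ∀ B ∈ S, ∃ A ∈ F, A ⊆ Y ∧ B ∩ Y ⊆ A)
    (hfiber : ∀ D, #D = k → #{B ∈ S | B \ Y ⊆ D} ≤ c) :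
    #S + #{B ∈ F | x ∈ B ∧ Disjoint B Y} ≤ (n - #Y - 1).choose (k - 1) := by
  let P : Finset (Finset (Fin n)) := {D ∈ powersetCard k Yᶜ | x ∈ D}
  have hdegree : ∀ B ∈ S, c + 1 ≤ #((P \ F).bipartiteAbove (fun B D ↦ B \ Y ⊆ D) B) := by
    intro B hB
    have hxBY : x ∈ B \ Y := mem_sdiff.2 ⟨hSx B hB, hxY⟩
    obtain ⟨A, hA, hAY, hBA⟩ := hSA B hB
    refine (hci.lt_card_filter_sdiff_subset hF hn hA hAY (hSF hB) hBA (hSY B hB)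
      fun h ↦ hxY (h (hSx B hB))).trans_le (card_le_card fun D hD ↦ ?_)
    simp only [P, bipartiteAbove, mem_filter, mem_sdiff] at hD ⊢
    exact ⟨⟨⟨hD.1.1, hD.2 hxBY⟩, hD.1.2⟩, hD.2⟩
  have hcount : #S * (c + 1) ≤ #(P \ F) * c :=
    card_mul_le_card_mul _ hdegree fun D hD ↦
      hfiber D (mem_powersetCard.1 (mem_filter.1 (mem_sdiff.1 hD).1).1).2
  have hSP : #S ≤ #(P \ F) := by nlinarith
  have hsub : {B ∈ F | x ∈ B ∧ Disjoint B Y} ⊆ P ∩ F := by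
    intro B hB
    obtain ⟨hBF, hxB, hBY⟩ := mem_filter.1 hB
    exact mem_inter.2 ⟨mem_filter.2 ⟨mem_powersetCard.2
      ⟨subset_compl_iff_disjoint_right.2 hBY, hF hBF⟩, hxB⟩, hBF⟩
  calc #S + #{B ∈ F | x ∈ B ∧ Disjoint B Y} ≤ #(P \ F) + #(P ∩ F) :=
        add_le_add hSP (card_le_card hsub)
    _ = #P := card_sdiff_add_card_inter P F
    _ ≤ (#Yᶜ - 1).choose (k - 1) := card_filter_mem_powersetCard_le (mem_compl.2 hxY) k
    _ = (n - #Y - 1).choose (k - 1) := by rw [card_compl, Fintype.card_fin]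

theorem card_filter_mem_le (hci : CondIntersecting 3 (2 * k) F)
    (hF : (F : Set (Finset (Fin n))).Sized k) (hn : (2 * k).choose k + 2 * k ≤ n)
    {A : Finset (Fin n)} {x : Fin n} (hA : A ∈ F) (hx : x ∉ A) :
    #{B ∈ F | x ∈ B} ≤ (n - k - 1).choose (k - 1) := by
  have hfiber (D : Finset (Fin n)) (hD : #D = k) :
      #{B ∈ {B ∈ F | x ∈ B ∧ ¬Disjoint B A} | B \ A ⊆ D} ≤ (2 * k).choose k := by
    have hAD : #(A ∪ D) ≤ 2 * k := by
      rw [two_mul]; exact (card_union_le A D).trans_eq (by rw [hF hA, hD])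
    calc _ ≤ #(powersetCard k (A ∪ D)) := card_le_card fun B hB ↦ by
          simp only [mem_filter] at hB
          exact mem_powersetCard.2 ⟨sdiff_le_iff.1 hB.2, hF hB.1.1⟩
      _ = (#(A ∪ D)).choose k := card_powersetCard k _
      _ ≤ (2 * k).choose k := Nat.choose_le_choose k hAD
  have hcount := hci.card_add_card_filter_disjoint_le hF (Y := A) (by rw [hF hA]; omega) hx
    (filter_subset _ F) (fun B hB ↦ (mem_filter.1 hB).2.1) (fun B hB ↦ (mem_filter.1 hB).2.2)
    (fun B _ ↦ ⟨A, hA, subset_rfl, inter_subset_right⟩) hfiber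
  rw [hF hA] at hcount
  refine le_trans (le_of_eq ?_) hcount
  rw [← card_filter_add_card_filter_not (fun B ↦ Disjoint B A), filter_filter, filter_filter,
    add_comm]

theorem card_le_of_offSupport (hci : CondIntersecting 3 (2 * k) F)
    (hF : (F : Set (Finset (Fin n))).Sized k) {x : Fin n}
    (hn : (k + 1) * #(offSupport F x) + k ≤ n) :
    #F ≤ (n - #(offSupport F x) - 1).choose (k - 1)
      + (#(offSupport F x)).choose 2 * (n - 3).choose (k - 3) + (#(offSupport F x)).choose k := by
  set Y := offSupport F x
  have hxY : x ∉ Y := notMem_offSupport F x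
  have hSA : ∀ B ∈ {B ∈ F | x ∈ B ∧ #(B ∩ Y) = 1}, ∃ A ∈ F, A ⊆ Y ∧ B ∩ Y ⊆ A := by
    intro B hB
    obtain ⟨y, hy⟩ := card_eq_one.1 (mem_filter.1 hB).2.2
    have hyY : y ∈ Y := inter_subset_right (hy ▸ mem_singleton_self y)
    obtain ⟨A, hA, hxA, hyA⟩ := mem_offSupport.1 hyY
    exact ⟨A, hA, subset_offSupport hA hxA, by rwa [hy, singleton_subset_iff]⟩
  have hSY : ∀ B ∈ {B ∈ F | x ∈ B ∧ #(B ∩ Y) = 1}, ¬Disjoint B Y := fun B hB ↦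
    not_disjoint_iff_nonempty_inter.2 (card_pos.1 ((mem_filter.1 hB).2.2 ▸ one_pos))
  have hfiber (D : Finset (Fin n)) (hD : #D = k) :
      #{B ∈ {B ∈ F | x ∈ B ∧ #(B ∩ Y) = 1} | B \ Y ⊆ D} ≤ k * #Y := by
    refine le_trans (card_le_card fun B hB ↦ ?_) (card_filter_inter_eq_one_le hF hD)
    simp only [mem_filter] at hB ⊢
    exact ⟨hB.1.1, hB.1.2.2, hB.2⟩
  have hfew := hci.card_add_card_filter_disjoint_le hF (by linarith) hxY (filter_subset _ F)
    (fun B hB ↦ (mem_filter.1 hB).2.1) hSY hSA hfiber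
  have hmany := card_filter_mem_one_lt_inter_le hF hxY
  rw [Fintype.card_fin] at hmany
  have hoff := card_filter_notMem_le hF x
  have hcover : F ⊆ {B ∈ F | x ∈ B ∧ #(B ∩ Y) = 1} ∪ {B ∈ F | x ∈ B ∧ Disjoint B Y}
      ∪ {B ∈ F | x ∈ B ∧ 1 < #(B ∩ Y)} ∪ {B ∈ F | x ∉ B} := by
    intro B hB
    simp only [mem_union, mem_filter, hB, true_and, disjoint_iff_inter_eq_empty, ← card_eq_zero]
    have : #(B ∩ Y) = 0 ∨ #(B ∩ Y) = 1 ∨ 1 < #(B ∩ Y) := by omega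
    tauto
  calc #F ≤ _ := card_le_card hcover
    _ ≤ #{B ∈ F | x ∈ B ∧ #(B ∩ Y) = 1} + #{B ∈ F | x ∈ B ∧ Disjoint B Y}
        + #{B ∈ F | x ∈ B ∧ 1 < #(B ∩ Y)} + #{B ∈ F | x ∉ B} := by
      iterate 3 grw [card_union_le]
    _ ≤ _ := by gcongr

end CondIntersecting

section ThickStar

variable {α : Type*} [DecidableEq α] {k : ℕ} {F : Finset (Finset α)}

/-- The members of `F` through `z` that meet every member of `F` through `z` in a further point.
If `F` is `(3, 2 * k)`-conditionally intersecting, every other member `A` through `z` is determined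
by `A \ {z}`. -/
def thickStar (F : Finset (Finset α)) (z : α) : Finset (Finset α) :=
  {A ∈ F | z ∈ A ∧ ∀ B ∈ F, A ∩ B ≠ {z}}

/-- A companion of `z` is a second point `x ≠ z` lying on all members of `F` through `z`; it
exists as soon as the thick star of `z` is large. -/
def IsCompanion (F : Finset (Finset α)) (z x : α) : Prop :=
  x ≠ z ∧ ∀ A ∈ F, z ∈ A → x ∈ A

theorem mem_thickStar {z : α} {A : Finset α} :
    A ∈ thickStar F z ↔ A ∈ F ∧ z ∈ A ∧ ∀ B ∈ F, A ∩ B ≠ {z} :=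
  mem_filter

theorem thickStar_subset (F : Finset (Finset α)) (z : α) : thickStar F z ⊆ {A ∈ F | z ∈ A} :=
  fun _ hA ↦ mem_filter.2 ⟨(mem_thickStar.1 hA).1, (mem_thickStar.1 hA).2.1⟩

theorem exists_mem_erase_of_mem_thickStar {z : α} {A B : Finset α} (hA : A ∈ thickStar F z)
    (hB : B ∈ F) (hz : z ∈ B) : ∃ b ∈ B.erase z, b ∈ A := by
  obtain ⟨-, hzA, hthick⟩ := mem_thickStar.1 hA
  have hnot : ¬A ∩ B ⊆ {z} := fun h ↦
    hthick B hB (h.antisymm (singleton_subset_iff.2 (mem_inter.2 ⟨hzA, hz⟩)))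
  obtain ⟨b, hb, hbz⟩ := not_subset.1 hnot
  exact ⟨b, mem_erase.2 ⟨mt mem_singleton.2 hbz, (mem_inter.1 hb).2⟩, (mem_inter.1 hb).1⟩

theorem card_le_mul_of_forall_exists_mem {s : Finset α} {m : ℕ} (hs : ∀ A ∈ F, ∃ b ∈ s, b ∈ A)
    (hm : ∀ b ∈ s, #{A ∈ F | b ∈ A} ≤ m) : #F ≤ #s * m := by
  refine le_trans (card_le_card fun A hA ↦ ?_) (card_biUnion_le_card_mul _ _ m hm)
  obtain ⟨b, hb, hbA⟩ := hs A hA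
  exact mem_biUnion.2 ⟨b, hb, mem_filter.2 ⟨hA, hbA⟩⟩

theorem card_thickStar_le_of_not_isCompanion [Fintype α] (hF : (F : Set (Finset α)).Sized k) {z : α}
    (hz : ∀ x, ¬IsCompanion F z x) :
    #(thickStar F z) ≤ (k - 1) ^ 2 * (Fintype.card α - 3).choose (k - 3) := by
  obtain hempty | ⟨A₀, hA₀⟩ := (thickStar F z).eq_empty_or_nonempty
  · simp [hempty]
  obtain ⟨hA₀F, hzA₀, -⟩ := mem_thickStar.1 hA₀
  have hcard (B : Finset α) (hB : B ∈ F) (hzB : z ∈ B) : #(B.erase z) = k - 1 := by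
    rw [card_erase_of_mem hzB, hF hB]
  rw [sq, mul_assoc, ← hcard A₀ hA₀F hzA₀]
  refine card_le_mul_of_forall_exists_mem
    (fun A hA ↦ exists_mem_erase_of_mem_thickStar hA hA₀F hzA₀) fun a ha ↦ ?_
  have haz : a ≠ z := ne_of_mem_erase ha
  obtain ⟨B, hB, hzB, haB⟩ : ∃ B ∈ F, z ∈ B ∧ a ∉ B := by
    by_contra! h
    exact hz a ⟨haz, h⟩
  rw [hcard A₀ hA₀F hzA₀, ← hcard B hB hzB]
  refine card_le_mul_of_forall_exists_mem
    (fun A hA ↦ exists_mem_erase_of_mem_thickStar (mem_filter.1 hA).1 hB hzB) fun b hb ↦ ?_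
  have hab : a ≠ b := fun h ↦ haB (h ▸ mem_of_mem_erase hb)
  have hthree : #{z, a, b} = 3 := card_eq_three.2
    ⟨z, a, b, haz.symm, (ne_of_mem_erase hb).symm, hab, rfl⟩
  rw [← hthree]
  refine card_le_choose_of_forall_subset (fun A hA ↦ ?_) fun A hA ↦ ?_ <;>
    simp only [mem_coe, mem_filter, mem_thickStar] at hA
  · exact hF hA.1.1.1
  · simp [insert_subset_iff, hA]

theorem card_filter_mem_le_of_isCompanion [Fintype α] (hF : (F : Set (Finset α)).Sized k) {z x : α}
    (hx : IsCompanion F z x) :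
    #{A ∈ F | z ∈ A} ≤ (Fintype.card α - 2).choose (k - 2) := by
  rw [← card_pair hx.1.symm]
  refine card_le_choose_of_forall_subset (hF.mono (coe_subset.2 (filter_subset _ _))) fun A hA ↦ ?_
  obtain ⟨hAF, hzA⟩ := mem_filter.1 hA
  simp [insert_subset_iff, hzA, hx.2 A hAF hzA]

end ThickStar

namespace CondIntersecting

variable {n k : ℕ} {F : Finset (Finset (Fin n))}

theorem eq_of_erase_subset (hci : CondIntersecting 3 (2 * k) F)
    (hF : (F : Set (Finset (Fin n))).Sized k) (hk : 1 < k) {A A' B : Finset (Fin n)} {z : Fin n}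
    (hA : A ∈ F) (hB : B ∈ F) (hAB : A ∩ B = {z}) (hA' : A' ∈ F) (hsub : A.erase z ⊆ A') :
    A' = A := by
  obtain ⟨hzA, hzB⟩ := mem_inter.1 (hAB ▸ mem_singleton_self z)
  by_contra hne
  have hz : z ∉ A' := fun hz ↦ hne (eq_of_subset_of_card_le
    (by rw [← insert_erase hzA]; exact insert_subset hz hsub) (by rw [hF hA, hF hA'])).symm
  have hAneB : A ≠ B := by
    rintro rfl
    rw [inter_self] at hAB
    exact hk.ne (by rw [← hF hA, hAB, card_singleton])
  have hcover : A ∪ B ∪ A' ⊆ B ∪ A' := by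
    have : A ⊆ B ∪ A' := by
      rw [← insert_erase hzA]
      exact insert_subset (mem_union_left _ hzB) (hsub.trans subset_union_right)
    exact union_subset (union_subset this subset_union_left) subset_union_right
  have hcard : #(A ∪ B ∪ A') ≤ 2 * k :=
    calc #(A ∪ B ∪ A') ≤ #(B ∪ A') := card_le_card hcover
      _ ≤ #B + #A' := card_union_le B A'
      _ = 2 * k := by rw [hF hB, hF hA', two_mul]
  obtain ⟨a, ha⟩ := hci.inter_inter_nonempty hA hB hA' hAneB (Ne.symm hne)
    (fun h ↦ hz (h ▸ hzB)) hcard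
  rw [hAB, mem_inter, mem_singleton] at ha
  exact hz (ha.1 ▸ ha.2)

theorem mul_card_le_choose_add_sum_thickStar (hci : CondIntersecting 3 (2 * k) F)
    (hF : (F : Set (Finset (Fin n))).Sized k) (hk : 1 < k) :
    k * #F ≤ n.choose (k - 1) + ∑ z, #(thickStar F z) := by
  let thin (z : Fin n) : Finset (Finset (Fin n)) := {A ∈ F | z ∈ A ∧ ∃ B ∈ F, A ∩ B = {z}}
  have hsplit (z : Fin n) : #{A ∈ F | z ∈ A} ≤ #(thin z) + #(thickStar F z) := by
    refine (card_le_card fun A hA ↦ ?_).trans (card_union_le _ _)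
    simp only [thin, mem_union, mem_filter, mem_thickStar] at hA ⊢
    grind
  have hmaps : ∀ p ∈ univ.sigma thin, p.2.erase p.1 ∈ powersetCard (k - 1) univ := by
    rintro ⟨z, A⟩ hp
    obtain ⟨hA, hz, -⟩ := mem_filter.1 (mem_sigma.1 hp).2
    exact mem_powersetCard_univ.2 (by rw [card_erase_of_mem hz, hF hA])
  have hinj : Set.InjOn (fun p : (_ : Fin n) × Finset (Fin n) ↦ p.2.erase p.1)
      (univ.sigma thin : Set ((_ : Fin n) × Finset (Fin n))) := by
    rintro ⟨z, A⟩ hp ⟨z', A'⟩ hp' heq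
    obtain ⟨hA, hz, B, hB, hAB⟩ := mem_filter.1 (mem_sigma.1 hp).2
    obtain ⟨hA', -⟩ := mem_filter.1 (mem_sigma.1 hp').2
    obtain rfl : A' = A := hci.eq_of_erase_subset hF hk hA hB hAB hA'
      (heq.trans_subset (erase_subset z' A'))
    obtain rfl : z = z' := (erase_inj A' hz).1 heq
    rfl
  have hthin : ∑ z, #(thin z) ≤ n.choose (k - 1) := by
    rw [← card_sigma]
    exact (card_le_card_of_injOn _ hmaps hinj).trans_eq (by simp)
  calc k * #F = ∑ A ∈ F, #(A ∩ univ) := by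
        simp_rw [inter_univ]; rw [sum_const_nat fun A hA ↦ hF hA, mul_comm]
    _ = ∑ z, #{A ∈ F | z ∈ A} := (sum_card_filter_mem F univ).symm
    _ ≤ ∑ z, (#(thin z) + #(thickStar F z)) := sum_le_sum fun z _ ↦ hsplit z
    _ ≤ n.choose (k - 1) + ∑ z, #(thickStar F z) := by
        rw [sum_add_distrib]; exact Nat.add_le_add_right hthin _

end CondIntersecting

section LowDegree

theorem card_filter_mul_lt_le {ι : Type*} {s : Finset ι} {f : ι → ℕ} {c q : ℕ}
    (hf : ∀ i ∈ s, f i ≤ q) (hsum : #s * q ≤ c * q + ∑ i ∈ s, f i) :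
    #{i ∈ s | (c + 1) * f i < q} ≤ c := by
  have hdeficit : (c + 1) * ∑ i ∈ s, f i + #{i ∈ s | (c + 1) * f i < q} * (c * q + 1)
      ≤ (c + 1) * (#s * q) :=
    calc _ = ∑ i ∈ s, ((c + 1) * f i + if (c + 1) * f i < q then c * q + 1 else 0) := by
          rw [sum_add_distrib, ← mul_sum, ← sum_filter, sum_const, smul_eq_mul]
      _ ≤ ∑ i ∈ s, (c + 1) * q := by
          refine sum_le_sum fun i hi ↦ ?_
          split_ifs with hlow
          · linarith
          · exact Nat.mul_le_mul_left _ (hf i hi)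
      _ = (c + 1) * (#s * q) := by rw [sum_const, smul_eq_mul]; ring
  have hlow : #{i ∈ s | (c + 1) * f i < q} * (c * q + 1) < (c + 1) * (c * q + 1) := by nlinarith
  exact Nat.le_of_lt_succ (Nat.lt_of_mul_lt_mul_right hlow)

theorem le_mul_of_mul_le_add {c n q t : ℕ} (hc : c < n) (ht : t ≤ q) (h : n * q ≤ c * q + n * t) :
    q ≤ (c + 1) * t := by
  obtain ⟨d, rfl⟩ := Nat.exists_eq_add_of_le ht
  have hd : (c + 1) * d ≤ n * d := Nat.mul_le_mul_right d hc
  linarith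

variable {α : Type*} [Fintype α] [DecidableEq α] {k c : ℕ} {F : Finset (Finset α)} {T : Finset α}

theorem card_filter_mul_card_lt_le (hF : (F : Set (Finset α)).Sized k) (hT : ∀ A ∈ F, T ⊆ A)
    (hTk : #T < k) (hTα : #T < Fintype.card α)
    (hlarge : Fintype.card α * (Fintype.card α - #T).choose (k - #T) ≤
      c * (Fintype.card α - #T).choose (k - #T) + Fintype.card α * #F) :
    #{w ∈ Tᶜ | (c + 1) * #{A ∈ F | w ∈ A} <
      (Fintype.card α - #T - 1).choose (k - #T - 1)} ≤ c := by
  set N := Fintype.card α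
  set p := (N - #T).choose (k - #T)
  set q := (N - #T - 1).choose (k - #T - 1)
  have hdegree : ∀ w ∈ Tᶜ, #{A ∈ F | w ∈ A} ≤ q := by
    intro w hw
    have hcard : #(insert w T) = #T + 1 := card_insert_of_notMem (mem_compl.1 hw)
    simp only [q, Nat.sub_sub, ← hcard]
    refine card_le_choose_of_forall_subset (hF.mono (coe_subset.2 (filter_subset _ _)))
      fun A hA ↦ ?_
    obtain ⟨hAF, hwA⟩ := mem_filter.1 hA
    exact insert_subset hwA (hT A hAF)
  have hsum : ∑ w ∈ Tᶜ, #{A ∈ F | w ∈ A} = #F * (k - #T) := by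
    rw [sum_card_filter_mem, sum_const_nat fun A hA ↦ ?_]
    rw [← sdiff_eq_inter_compl, card_sdiff_of_subset (hT A hA), hF hA]
  have hpq : (N - #T) * q = (k - #T) * p :=
    mul_choose_sub_one (Nat.sub_pos_of_lt hTα) (Nat.sub_pos_of_lt hTk)
  have hpq' : (k - #T) * p ≤ N * q := hpq ▸ Nat.mul_le_mul_right q (Nat.sub_le N #T)
  refine card_filter_mul_lt_le hdegree ?_
  rw [hsum, card_compl, hpq]
  refine Nat.le_of_mul_le_mul_left (c := N) ?_ (by omega)
  calc N * ((k - #T) * p) = (k - #T) * (N * p) := by ring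
    _ ≤ (k - #T) * (c * p + N * #F) := Nat.mul_le_mul_left _ hlarge
    _ = c * ((k - #T) * p) + N * (#F * (k - #T)) := by ring
    _ ≤ c * (N * q) + N * (#F * (k - #T)) := by gcongr
    _ = N * (c * q + #F * (k - #T)) := by ring

end LowDegree

section Companion

variable {n k : ℕ} {F : Finset (Finset (Fin n))} {z x : Fin n}

theorem choose_add_mul_choose_sub_two_le {f : ℕ} (hk : 3 ≤ k) (hn : 2 * k ≤ n)
    (hf : (n - k - 1).choose (k - 1) ≤ f) :
    n.choose (k - 1) + n * (n - 2).choose (k - 2) ≤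
      k * f + (k ^ 2 + 3) * (n - 2).choose (k - 2) := by
  obtain ⟨j, rfl⟩ := Nat.exists_eq_add_of_le' hk
  obtain ⟨p, rfl⟩ := Nat.exists_eq_add_of_le' (show 3 ≤ n by omega)
  simp only [Nat.reduceSubDiff] at hf ⊢
  have hstar : (p + 2).choose (j + 2) ≤
      (p - j - 1).choose (j + 2) + (j + 3) * (p + 1).choose (j + 1) := by
    have h := choose_add_succ_le (p - j - 1) (j + 1) (j + 2)
    rwa [show p - j - 1 + (j + 2) = p + 1 by omega] at h
  have hmono : (p + 1).choose j ≤ (p + 1).choose (j + 1) :=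
    Nat.choose_le_succ_of_lt_half_left (by omega)
  have habsorb : (p + 2) * (p + 1).choose (j + 1) = (p + 2).choose (j + 2) * (j + 2) :=
    Nat.add_one_mul_choose_eq (p + 1) (j + 1)
  rw [Nat.choose_succ_succ' (p + 2), Nat.choose_succ_succ' (p + 1) j]
  have hscaled := Nat.mul_le_mul_left (j + 3) (hstar.trans (Nat.add_le_add_right hf _))
  nlinarith

theorem card_filter_mul_card_lt_le_of_isCompanion {c : ℕ} (hk : 2 < k) (hn : 2 < n)
    (hF : (F : Set (Finset (Fin n))).Sized k) (hx : IsCompanion F z x)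
    (hz : n * (n - 2).choose (k - 2) ≤ c * (n - 2).choose (k - 2) + n * #{A ∈ F | z ∈ A}) :
    #{w ∈ {z, x}ᶜ | (c + 1) * #{A ∈ {A ∈ F | z ∈ A} | w ∈ A} < (n - 3).choose (k - 3)} ≤ c := by
  have hpair : #{z, x} = 2 := card_pair hx.1.symm
  have hsub : ∀ A ∈ {A ∈ F | z ∈ A}, {z, x} ⊆ A := by
    intro A hA
    obtain ⟨hAF, hzA⟩ := mem_filter.1 hA
    simp [insert_subset_iff, hzA, hx.2 A hAF hzA]
  have h := card_filter_mul_card_lt_le (c := c) (hF.mono (coe_subset.2 (filter_subset (z ∈ ·) F)))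
    hsub (by rwa [hpair]) (by rwa [hpair, Fintype.card_fin])
    (by rwa [hpair, Fintype.card_fin])
  rwa [hpair, Fintype.card_fin] at h

variable (hk : 3 ≤ k) (hn : k ^ 2 * (k - 1) * (2 * k - 1) * (2 * k + 1) ≤ 4 * n)
include hk hn

theorem exists_isCompanion (hF : (F : Set (Finset (Fin n))).Sized k)
    (hz : (n - 2).choose (k - 2) ≤ (k ^ 2 + 4) * #(thickStar F z)) : ∃ x, IsCompanion F z x := by
  by_contra! h
  have hle := card_thickStar_le_of_not_isCompanion hF h
  rw [Fintype.card_fin] at hle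
  exact (mul_choose_lt_choose_sub_two hk hn).not_ge (hz.trans (Nat.mul_le_mul_left _ hle))

theorem card_thickStar_le (hF : (F : Set (Finset (Fin n))).Sized k) (z : Fin n) :
    #(thickStar F z) ≤ (n - 2).choose (k - 2) := by
  by_cases hlarge : (n - 2).choose (k - 2) ≤ (k ^ 2 + 4) * #(thickStar F z)
  · obtain ⟨x, hx⟩ := exists_isCompanion hk hn hF hlarge
    simpa only [Fintype.card_fin] using
      (card_le_card (thickStar_subset F z)).trans (card_filter_mem_le_of_isCompanion hF hx)
  · nlinarith

theorem exists_isCompanion_mul_choose_le (hF : (F : Set (Finset (Fin n))).Sized k)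
    (hsum : n * (n - 2).choose (k - 2) ≤
      (k ^ 2 + 3) * (n - 2).choose (k - 2) + ∑ z, #(thickStar F z)) :
    ∃ z x, IsCompanion F z x ∧ n * (n - 2).choose (k - 2) ≤
      (k ^ 2 + 3) * (n - 2).choose (k - 2) + n * #{A ∈ F | z ∈ A} := by
  have hcubic := cubic_le hk hn
  set q := (n - 2).choose (k - 2)
  obtain ⟨z, -, hz⟩ : ∃ z ∈ univ, n * q ≤ (k ^ 2 + 3) * q + n * #(thickStar F z) := by
    refine exists_le_of_sum_le ⟨(⟨0, by omega⟩ : Fin n), mem_univ _⟩ ?_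
    simp only [sum_add_distrib, ← mul_sum, sum_const, card_univ, Fintype.card_fin, smul_eq_mul]
    linarith [Nat.mul_le_mul_left n hsum]
  obtain ⟨x, hx⟩ := exists_isCompanion hk hn hF
    (le_mul_of_mul_le_add (by nlinarith) (card_thickStar_le hk hn hF z) hz)
  exact ⟨z, x, hx, hz.trans (by gcongr; exact thickStar_subset F z)⟩

theorem mul_card_lt_choose_sub_three (hF : (F : Set (Finset (Fin n))).Sized k)
    {T : Finset (Fin n)} (hT : #T = 4) (hTF : ∀ A ∈ F, T ⊆ A) :
    (k ^ 2 + 4) * #F < (n - 3).choose (k - 3) := by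
  obtain rfl | hk4 := hk.eq_or_lt
  · have hempty : F = ∅ := eq_empty_of_forall_notMem fun A hA ↦ by
      have hcard := card_le_card (hTF A hA)
      rw [hF hA, hT] at hcard
      omega
    simp [hempty]
  · have hquintic := quintic_lt hk hn
    have hkn : k ≤ n := le_of_add_le_right (cubic_le hk hn)
    have hF4 := card_le_choose_of_forall_subset hF hTF
    rw [hT, Fintype.card_fin] at hF4
    have hcoeff : (k ^ 2 + 4) * (k - 3) < (k ^ 2 + 4) * (k - 1) ^ 2 * (k - 2) :=
      Nat.mul_lt_mul_of_le_of_lt (Nat.le_mul_of_pos_right _ (pow_pos (by omega) 2)) (by omega)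
        (Nat.mul_pos (by positivity) (pow_pos (by omega) 2))
    have h := mul_choose_lt_choose_succ_succ (a := n - 4) (b := k - 4) (t := k ^ 2 + 4) (by omega)
      (by rw [show k - 4 + 1 = k - 3 by omega]; omega)
    rw [show n - 4 + 1 = n - 3 by omega, show k - 4 + 1 = k - 3 by omega] at h
    exact (Nat.mul_le_mul_left _ hF4).trans_lt h

theorem offSupport_subset_of_isCompanion (hF : (F : Set (Finset (Fin n))).Sized k)
    (hx : IsCompanion F z x) :
    offSupport F x ⊆
      ({w | (k ^ 2 + 4) * #(thickStar F w) < (n - 2).choose (k - 2)} : Finset (Fin n)) ∪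
      {w ∈ ({z, x} : Finset (Fin n))ᶜ |
        (k ^ 2 + 4) * #{A ∈ {A ∈ F | z ∈ A} | w ∈ A} < (n - 3).choose (k - 3)} := by
  intro w hw
  obtain ⟨A, hA, hxA, hwA⟩ := mem_offSupport.1 hw
  have hzA : z ∉ A := fun hzA ↦ hxA (hx.2 A hA hzA)
  rw [mem_union, mem_filter_univ, or_iff_not_imp_left, not_lt]
  intro hthick
  obtain ⟨y, hyw, hy⟩ := exists_isCompanion hk hn hF hthick
  have hyA : y ∈ A := hy A hA hwA
  have hwz : w ≠ z := fun h ↦ hzA (h ▸ hwA)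
  have hwx : w ≠ x := fun h ↦ hxA (h ▸ hwA)
  have hyz : y ≠ z := fun h ↦ hzA (h ▸ hyA)
  have hyx : y ≠ x := fun h ↦ hxA (h ▸ hyA)
  have hfour : #{z, x, w, y} = 4 := card_eq_four.2
    ⟨z, x, w, y, hx.1.symm, hwz.symm, hyz.symm, hwx.symm, hyx.symm, hyw.symm, rfl⟩
  refine mem_filter.2 ⟨by simp [hwz, hwx], ?_⟩
  rw [filter_filter]
  refine mul_card_lt_choose_sub_three hk hn (hF.mono (coe_subset.2 (filter_subset _ _))) hfour
    fun B hB ↦ ?_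
  obtain ⟨hBF, hzB, hwB⟩ := mem_filter.1 hB
  simp [insert_subset_iff, hzB, hx.2 B hBF hzB, hwB, hy B hBF hwB]

end Companion

namespace CondIntersecting

variable {n k : ℕ} {F : Finset (Finset (Fin n))}

theorem exists_card_offSupport_le (hci : CondIntersecting 3 (2 * k) F)
    (hF : (F : Set (Finset (Fin n))).Sized k) (hk : 3 ≤ k)
    (hn : k ^ 2 * (k - 1) * (2 * k - 1) * (2 * k + 1) ≤ 4 * n)
    (hlarge : (n - k - 1).choose (k - 1) ≤ #F) :
    ∃ x, #(offSupport F x) ≤ 2 * (k ^ 2 + 3) := by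
  have hcubic := cubic_le hk hn
  have hlinear := choose_add_mul_choose_sub_two_le hk (by nlinarith) hlarge
  have hdouble := hci.mul_card_le_choose_add_sum_thickStar hF (by omega)
  have hsum : n * (n - 2).choose (k - 2) ≤
      (k ^ 2 + 3) * (n - 2).choose (k - 2) + ∑ z, #(thickStar F z) := by omega
  have hthin : #{z | (k ^ 2 + 4) * #(thickStar F z) < (n - 2).choose (k - 2)} ≤ k ^ 2 + 3 :=
    card_filter_mul_lt_le (fun z _ ↦ card_thickStar_le hk hn hF z) (by simpa using hsum)
  obtain ⟨z, x, hx, hz⟩ := exists_isCompanion_mul_choose_le hk hn hF hsum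
  have hlow := card_filter_mul_card_lt_le_of_isCompanion hk (by omega) hF hx hz
  refine ⟨x, ?_⟩
  calc #(offSupport F x) ≤ _ := card_le_card (offSupport_subset_of_isCompanion hk hn hF hx)
    _ ≤ _ := card_union_le _ _
    _ ≤ 2 * (k ^ 2 + 3) := by rw [two_mul]; exact add_le_add hthin hlow

end CondIntersecting

theorem stmt4_general {n k : ℕ} (hk : 3 ≤ k)
    (hpoly : k ^ 2 * (k - 1) * (2 * k - 1) * (2 * k + 1) ≤ 4 * n)
    (hchoose : (2 * k).choose k + 2 * k ≤ n) {F : Finset (Finset (Fin n))}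
    (hF : (F : Set (Finset (Fin n))).Sized k) (hci : CondIntersecting 3 (2 * k) F)
    (hstar : ∀ x, ∃ A ∈ F, x ∉ A) : #F ≤ (n - k - 1).choose (k - 1) + 1 := by
  by_contra! hlarge
  obtain ⟨x, hx⟩ := hci.exists_card_offSupport_le hF hk hpoly (by omega)
  obtain ⟨A, hA, hxA⟩ := hstar x
  have hdegree : #{B ∈ F | x ∈ B} ≤ (n - k - 1).choose (k - 1) :=
    hci.card_filter_mem_le hF hchoose hA hxA
  have hsplit := card_filter_add_card_filter_not (s := F) (x ∈ ·)
  have hmore : k < #(offSupport F x) := lt_card_offSupport hF (by omega)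
  have hroom : (k + 1) * #(offSupport F x) + k ≤ n :=
    le_trans (by gcongr) (cubic_le hk hpoly)
  have hcard := (hci.card_le_of_offSupport hF hroom).trans
    (choose_add_mul_choose_add_choose_le hk hpoly hmore hx)
  omega

theorem stmt4 (n k : ℕ) (hk : 3 ≤ k) (hn : 3 * k * (2 * k).choose k ≤ n)
    (F : Finset (Finset (Fin n))) (hunif : ∀ S ∈ F, S.card = k)
    (hci : CondIntersecting 3 (2 * k) F)
    (hnotint : ∃ A ∈ F, ∃ B ∈ F, A ≠ B ∧ Disjoint A B) :
    F.card ≤ (n - k - 1).choose (k - 1) + 1 := by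
  obtain ⟨A, hA, B, hB, -, hAB⟩ := hnotint
  exact stmt4_general hk (quintic_le_of_mul_choose_le hn)
    (choose_add_le_of_mul_choose_le (by omega) hn) (fun _ hS ↦ hunif _ hS) hci
    (exists_notMem_of_disjoint hA hB hAB)
end
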